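/- arXiv:1306.4791 — 2 statements merged into one kernel-verified Lean document; each statement's English description precedes it below -/
import Mathlib

section
/- Let K be a UFD of characteristic p > 0, let d be a nonzero K-derivation of K[x,y] such that d(x) and d(y) are coprime, and let f ∈ K[x,y] \ K[x^p,y^p]. The following conditions are equivalent: (1) K[x,y]^d = K[x^p, y^p, f] (the K-subalgebra generated by x^p, y^p and f); (2) d = c·d_f for some invertible element c ∈ K; (3) d(f) = 0 and gcd(∂f/∂x, ∂f/∂y) is a unit; (4) d* = 0, f − f_{(p)} is nonzero, belongs to K[x,y]^d, has minimal total degree among all nonzero polynomials of the form h − h_{(p)} (h ∈ K[x,y]) belonging to K[x,y]^d, and f − f_{(p)} is not divisible by any non-invertible element of K \ {0}. -/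
/-!
Write `B = K[x^p,y^p]`, the ring of common constants of `∂/∂x` and `∂/∂y` (`gradConst`). Since
`d x` and `d y` are coprime, `d f = 0` means that the gradient of `f` equals `h · (d y, -d x)` for a
polynomial `h` (`exists_factor_of_isRelPrime`), and condition (3) says that moreover `h` is a unit.
The units of `K[x,y]` are those of `K`, so (3) is equivalent to (2).

(3) implies (1) (`ker_eq_of_isRelPrime`). If `d g = 0`, then `dg = r df` for a polynomial `r`, and
`dr` is again parallel to `df`. As `r` has smaller degree than `g`, induction gives
`r = ∑_{i<p} b_i f^i` with `b_i ∈ B`. The terms with `i < p - 1` integrate to elements of `B[f]`,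
so `b_{p-1} f^{p-1} df` is exact. This forces `b_{p-1} = 0` by the Cartier-type congruence
`f^{p-1} E f ≡ (E f)^p` modulo the image of an Euler derivation `E` (`exists_pow_mul_eulerDer`,
`eq_zero_of_exact`): `(E f)^p` is a constant, and a constant in the image of `E`, which is diagonal
on monomials, vanishes. Hence `g ∈ B[f]` (`exists_sum_of_parallel`).

(1) implies (3) (`isRelPrime_of_ker_eq`). Suppose a prime `q` divides `h`. The differential of `f`
vanishes in the fraction field of `K[x,y]/(q)`, a purely inseparable extension of exponent one of
the field generated by `B`, so `f` lies in that field (`mem_of_differential_eq_zero`): there are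
`w, u ∈ B` with `q ∤ w` and `q ∣ w f - u`. If `q ∉ B`, differentiating shows `q² ∣ w f - u`. Either
way some power `(w f - u)^k` with `k < p` is divisible by `π ∈ B` with `q ∣ π`
(`exists_divisible_power`). The quotient is a constant of `d`, but it is not in `B[f]`: as
`1, f, …, f^{p-1}` are independent over `B` (`polynomial_eq_zero`), that would give `π ∣ w^k`.

(3) is equivalent to (4) (`minimal_of_isRelPrime`, `isRelPrime_of_minimal`). Under (3), gradients of
constants of `d` are polynomial multiples of that of `f`, and degrees can be compared. Conversely,
zero divergence makes `h` a constant of `d`; as its degree is smaller than that of `f - f_{(p)}`,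
minimality gives `h ∈ B`. Then `h` divides `f - f_{(p)}` (`dvd_sub_pPart`), the quotient is again a
competitor, so `h` has degree zero, and primitivity makes it a unit.
-/

open MvPolynomial

/-- `f_{(p)}`: the coefficient `a₀₀ ∈ K[x^p,y^p]` in the unique representation
`f = Σ_{0≤i,j<p} a_{ij} x^i y^j` with `a_{ij} ∈ K[x^p,y^p]`; concretely it is the
sum of the monomials of `f` in which both exponents are divisible by `p`. -/
noncomputable def pPart {K : Type*} [CommRing K] (p : ℕ)
    (f : MvPolynomial (Fin 2) K) : MvPolynomial (Fin 2) K :=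
  ∑ m ∈ f.support.filter (fun m => ∀ i, p ∣ m i), monomial m (coeff m f)

/-! ### Euler derivations, `f_{(p)}` and the ring `K[x^p,y^p]` -/

/-- The Euler derivation `xᵢ ∂/∂xᵢ`, which is diagonal on monomials. -/
noncomputable def eulerDer {K : Type*} [CommRing K] (i : Fin 2) :
    Derivation K (MvPolynomial (Fin 2) K) (MvPolynomial (Fin 2) K) :=
  (X i : MvPolynomial (Fin 2) K) • pderiv i

section Basics

variable {K : Type*} [CommRing K]

lemma eulerDer_apply (i : Fin 2) (f : MvPolynomial (Fin 2) K) :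
    eulerDer i f = X i * pderiv i f := rfl

lemma coeff_eulerDer (i : Fin 2) (f : MvPolynomial (Fin 2) K) (m : Fin 2 →₀ ℕ) :
    coeff m (eulerDer i f) = (m i : K) * coeff m f := by
  induction f using MvPolynomial.induction_on' with
  | monomial s a =>
    rw [eulerDer_apply, X_mul_pderiv_monomial, coeff_smul, coeff_monomial]
    split_ifs with h
    · subst h; simp
    · simp
  | add f g hf hg => rw [map_add, coeff_add, hf, hg, coeff_add, mul_add]

/-- Every derivation of `K[x,y]` is determined by its values on the variables. -/
lemma derivation_apply_eq (d : Derivation K (MvPolynomial (Fin 2) K) (MvPolynomial (Fin 2) K))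
    (g : MvPolynomial (Fin 2) K) :
    d g = pderiv 0 g * d (X 0) + pderiv 1 g * d (X 1) := by
  have h : d = d (X 0) • pderiv 0 + d (X 1) • pderiv 1 := by
    apply MvPolynomial.derivation_ext
    intro i
    fin_cases i <;> simp [pderiv_X]
  conv_lhs => rw [h]
  simp [mul_comm]

lemma pderiv_comm01 (f : MvPolynomial (Fin 2) K) :
    pderiv 0 (pderiv 1 f) = pderiv 1 (pderiv 0 f) := by
  induction f using MvPolynomial.induction_on with
  | C a => simp
  | add f g hf hg => simp [hf, hg]
  | mul_X f i hf =>
    fin_cases i <;> simp [pderiv_X, hf] <;> ring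

lemma coeff_pPart (p : ℕ) (f : MvPolynomial (Fin 2) K) (m : Fin 2 →₀ ℕ) :
    coeff m (pPart p f) = if ∀ i, p ∣ m i then coeff m f else 0 := by
  classical
  unfold pPart
  rw [coeff_sum]
  simp only [coeff_monomial, Finset.sum_ite_eq', Finset.mem_filter, mem_support_iff]
  by_cases h : coeff m f = 0 <;> simp [h]

lemma pPart_add (p : ℕ) (f g : MvPolynomial (Fin 2) K) :
    pPart p (f + g) = pPart p f + pPart p g := by
  ext m
  simp only [coeff_pPart, coeff_add]
  split_ifs <;> simp

lemma pPart_sub (p : ℕ) (f g : MvPolynomial (Fin 2) K) :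
    pPart p (f - g) = pPart p f - pPart p g := by
  ext m
  simp only [coeff_pPart, coeff_sub]
  split_ifs <;> simp

lemma pPart_pPart (p : ℕ) (f : MvPolynomial (Fin 2) K) :
    pPart p (pPart p f) = pPart p f := by
  ext m
  simp only [coeff_pPart]
  split_ifs <;> simp

lemma pPart_sub_self (p : ℕ) (f : MvPolynomial (Fin 2) K) :
    pPart p (f - pPart p f) = 0 := by
  rw [pPart_sub, pPart_pPart, sub_self]

/-- The common constants of both partial derivatives. Over a domain `K` of characteristic `p` this
is the ring `K[x^p, y^p]`, see `gradConst_eq_adjoin`. -/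
def gradConst (K : Type*) [CommRing K] : Subalgebra K (MvPolynomial (Fin 2) K) where
  carrier := {g | pderiv 0 g = 0 ∧ pderiv 1 g = 0}
  mul_mem' := by
    rintro a b ⟨h1, h2⟩ ⟨h3, h4⟩
    simp [h1, h2, h3, h4]
  add_mem' := by
    rintro a b ⟨h1, h2⟩ ⟨h3, h4⟩
    simp [h1, h2, h3, h4]
  algebraMap_mem' := by
    intro r
    simp [MvPolynomial.algebraMap_eq]

lemma mem_gradConst {g : MvPolynomial (Fin 2) K} :
    g ∈ gradConst K ↔ pderiv 0 g = 0 ∧ pderiv 1 g = 0 := Iff.rfl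

lemma pderiv_of_mem {g : MvPolynomial (Fin 2) K} (h : g ∈ gradConst K) (i : Fin 2) :
    pderiv i g = 0 := by
  fin_cases i
  · exact h.1
  · exact h.2

lemma derivation_of_mem
    (d : Derivation K (MvPolynomial (Fin 2) K) (MvPolynomial (Fin 2) K))
    {g : MvPolynomial (Fin 2) K} (h : g ∈ gradConst K) : d g = 0 := by
  rw [derivation_apply_eq, h.1, h.2]; simp

lemma derivation_const_mul
    (d : Derivation K (MvPolynomial (Fin 2) K) (MvPolynomial (Fin 2) K))
    {b : MvPolynomial (Fin 2) K} (h : b ∈ gradConst K) (g : MvPolynomial (Fin 2) K) :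
    d (b * g) = b * d g := by
  rw [d.leibniz, derivation_of_mem d h]; simp

end Basics

section CharPFacts

variable {K : Type*} [CommRing K]

lemma pow_p_mem_gradConst (p : ℕ) [CharP K p] (g : MvPolynomial (Fin 2) K) :
    g ^ p ∈ gradConst K := by
  constructor <;> simp [Derivation.leibniz_pow]

lemma pPart_monomial_mul (p : ℕ) (s : Fin 2 →₀ ℕ) (hs : ∀ i, p ∣ s i) (r : K)
    (g : MvPolynomial (Fin 2) K) :
    pPart p (monomial s r * g) = monomial s r * pPart p g := by
  ext m
  rw [coeff_pPart, coeff_monomial_mul', coeff_monomial_mul', coeff_pPart]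
  by_cases hsm : s ≤ m
  · have : (∀ i, p ∣ m i) ↔ ∀ i, p ∣ (m - s) i := by
      refine forall_congr' fun i => ?_
      rw [Finsupp.tsub_apply, Nat.dvd_sub_iff_left (hsm i) (hs i)]
    simp only [hsm, if_true, this]
    split_ifs <;> simp
  · simp [hsm]

/-- A constant of both partial derivatives that divides the gradient of `f` divides
`f - f_{(p)}`, because `f - f_{(p)}` is a combination of iterated Euler derivatives of `f`. -/
lemma dvd_sub_pPart (p : ℕ) [hp : Fact p.Prime] [CharP K p] {h f : MvPolynomial (Fin 2) K}
    (hh : h ∈ gradConst K) (hf : ∀ i, h ∣ pderiv i f) : h ∣ f - pPart p f := by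
  have hstep : ∀ (i : Fin 2) (g : MvPolynomial (Fin 2) K), h ∣ g → h ∣ eulerDer i g := by
    rintro i _ ⟨u, rfl⟩
    rw [derivation_const_mul _ hh]
    exact dvd_mul_right _ _
  have hit : ∀ (i : Fin 2) (k : ℕ) (g : MvPolynomial (Fin 2) K), h ∣ g →
      h ∣ (eulerDer i)^[k] g := by
    intro i k
    induction k with
    | zero => intro g hg; exact hg
    | succ k ih => intro g hg; exact ih _ (hstep i g hg)
  have hcoeff : ∀ (i : Fin 2) (k : ℕ) (g : MvPolynomial (Fin 2) K) (m),
      coeff m ((eulerDer i)^[k] g) = (m i : K) ^ k * coeff m g := by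
    intro i k
    induction k with
    | zero => intro g m; simp
    | succ k ih => intro g m; rw [Function.iterate_succ_apply, ih, coeff_eulerDer]; ring
  have hf' : ∀ i, h ∣ (eulerDer i)^[p - 1] f := by
    intro i
    have h2 := hp.out.two_le
    obtain ⟨k, hk⟩ : ∃ k, p - 1 = k + 1 := ⟨p - 2, by omega⟩
    rw [hk, Function.iterate_succ_apply]
    exact hit _ _ _ (dvd_mul_of_dvd_right (hf i) _)
  have hfermat : ∀ n : ℕ, (n : K) ^ (p - 1) = if p ∣ n then 0 else 1 := by
    intro n
    split_ifs with hn
    · rw [(CharP.cast_eq_zero_iff K p n).2 hn, zero_pow]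
      have := hp.out.two_le
      omega
    · have h1 : ((n : ZMod p)) ^ (p - 1) = 1 :=
        ZMod.pow_card_sub_one_eq_one (by rwa [Ne, ZMod.natCast_eq_zero_iff])
      have := congrArg (ZMod.castHom dvd_rfl K) h1
      simpa using this
  have key : f - pPart p f = (eulerDer 0)^[p - 1] f + (eulerDer 1)^[p - 1] f
      - (eulerDer 0)^[p - 1] ((eulerDer 1)^[p - 1] f) := by
    ext m
    simp only [coeff_sub, coeff_add, hcoeff, coeff_pPart, hfermat, Fin.forall_fin_two]
    split_ifs <;> simp_all
  rw [key]
  exact dvd_sub (dvd_add (hf' 0) (hf' 1)) (hit _ _ _ (hf' 1))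

variable [IsDomain K]

lemma eulerDer_eq_zero_iff (i : Fin 2) (g : MvPolynomial (Fin 2) K) :
    eulerDer i g = 0 ↔ pderiv i g = 0 := by
  rw [eulerDer_apply, mul_eq_zero]
  simp [X_ne_zero]

lemma mem_gradConst_iff_eulerDer {g : MvPolynomial (Fin 2) K} :
    g ∈ gradConst K ↔ ∀ i, eulerDer i g = 0 := by
  simp [mem_gradConst, eulerDer_eq_zero_iff, Fin.forall_fin_two]

lemma mem_gradConst_iff_coeff (p : ℕ) [CharP K p] {g : MvPolynomial (Fin 2) K} :
    g ∈ gradConst K ↔ ∀ m, coeff m g ≠ 0 → ∀ i, p ∣ m i := by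
  rw [mem_gradConst_iff_eulerDer]
  constructor
  · intro h m hm i
    have := congrArg (coeff m) (h i)
    rw [coeff_eulerDer, coeff_zero, mul_eq_zero, or_iff_left hm] at this
    exact (CharP.cast_eq_zero_iff K p _).1 this
  · intro h i
    ext m
    rw [coeff_eulerDer, coeff_zero, mul_eq_zero, CharP.cast_eq_zero_iff K p]
    by_cases hm : coeff m g = 0
    · exact Or.inr hm
    · exact Or.inl (h m hm i)

lemma pPart_mem_gradConst (p : ℕ) [CharP K p] (g : MvPolynomial (Fin 2) K) :
    pPart p g ∈ gradConst K := by
  rw [mem_gradConst_iff_coeff p]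
  intro m hm
  rw [coeff_pPart] at hm
  by_contra h
  exact hm (if_neg h)

lemma pPart_eq_self_iff (p : ℕ) [CharP K p] {g : MvPolynomial (Fin 2) K} :
    pPart p g = g ↔ g ∈ gradConst K := by
  constructor
  · intro h
    rw [← h]
    exact pPart_mem_gradConst p g
  · intro h
    ext m
    rw [coeff_pPart]
    split_ifs with hm
    · rfl
    · by_contra h0
      exact hm ((mem_gradConst_iff_coeff p).1 h m (Ne.symm h0))

lemma gradConst_eq_adjoin (p : ℕ) [CharP K p] :
    gradConst K = Algebra.adjoin K ({X 0 ^ p, X 1 ^ p} : Set (MvPolynomial (Fin 2) K)) := by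
  apply le_antisymm
  · intro g hg
    rw [g.as_sum]
    refine Subalgebra.sum_mem _ fun m hm => ?_
    obtain ⟨a, ha⟩ := (mem_gradConst_iff_coeff p).1 hg m (mem_support_iff.1 hm) 0
    obtain ⟨b, hb⟩ := (mem_gradConst_iff_coeff p).1 hg m (mem_support_iff.1 hm) 1
    have : monomial m (coeff m g)
        = C (coeff m g) * (((X 0 ^ p) ^ a * (X 1 ^ p) ^ b : MvPolynomial (Fin 2) K)) := by
      rw [monomial_eq, Finsupp.prod_fintype _ _ (by simp), Fin.prod_univ_two, ha, hb,
        pow_mul, pow_mul]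
    rw [this]
    exact Subalgebra.mul_mem _ (Subalgebra.algebraMap_mem _ _) (Subalgebra.mul_mem _
      (Subalgebra.pow_mem _ (Algebra.subset_adjoin (by simp)) _)
      (Subalgebra.pow_mem _ (Algebra.subset_adjoin (by simp)) _))
  · rw [Algebra.adjoin_le_iff]
    rintro _ (rfl | rfl) <;> exact pow_p_mem_gradConst p _

lemma pPart_mul_of_mem (p : ℕ) [CharP K p] {h : MvPolynomial (Fin 2) K}
    (hh : h ∈ gradConst K) (g : MvPolynomial (Fin 2) K) :
    pPart p (h * g) = h * pPart p g := by
  have key : ∀ S : Finset (Fin 2 →₀ ℕ), S ⊆ h.support →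
      pPart p ((∑ m ∈ S, monomial m (coeff m h)) * g)
        = (∑ m ∈ S, monomial m (coeff m h)) * pPart p g := by
    intro S
    induction S using Finset.induction_on with
    | empty => intro _; simp [pPart]
    | insert a S ha ih =>
      intro hS
      rw [Finset.sum_insert ha, add_mul, pPart_add, add_mul,
        ih ((Finset.subset_insert _ _).trans hS), pPart_monomial_mul]
      exact (mem_gradConst_iff_coeff p).1 hh a
        (mem_support_iff.1 (hS (Finset.mem_insert_self _ _)))
  have := key h.support le_rfl
  rwa [← h.as_sum] at this

lemma totalDegree_pderiv_lt {i : Fin 2} {g : MvPolynomial (Fin 2) K} (h : pderiv i g ≠ 0) :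
    (pderiv i g).totalDegree + 1 ≤ g.totalDegree := by
  have h1 : (eulerDer i g).totalDegree = (pderiv i g).totalDegree + 1 := by
    rw [eulerDer_apply, totalDegree_mul_of_isDomain (X_ne_zero i) h, totalDegree_X, add_comm]
  rw [← h1]
  refine totalDegree_le_of_support_subset fun m hm => ?_
  rw [mem_support_iff, coeff_eulerDer] at hm
  exact mem_support_iff.2 (right_ne_zero_of_mul hm)

/-- If `f ≠ 0` and no monomial of `f` lies in `K[x^p,y^p]`, some partial derivative drops the degree by
exactly one. -/
lemma exists_totalDegree_le_pderiv (p : ℕ) [CharP K p] {f : MvPolynomial (Fin 2) K}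
    (hf0 : f ≠ 0) (hf : pPart p f = 0) :
    ∃ i, pderiv i f ≠ 0 ∧ f.totalDegree ≤ (pderiv i f).totalDegree + 1 := by
  obtain ⟨m, hm, hdeg⟩ := Finset.exists_mem_eq_sup f.support
    (support_nonempty.2 hf0) (fun s => s.sum fun _ e => e)
  have hm' := mem_support_iff.1 hm
  have h1 : ¬ ∀ i, p ∣ m i := by
    intro h
    have := congrArg (coeff m) hf
    rw [coeff_pPart, if_pos h, coeff_zero] at this
    exact hm' this
  push Not at h1
  obtain ⟨i, hi⟩ := h1
  have h2 : coeff m (eulerDer i f) ≠ 0 := by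
    rw [coeff_eulerDer]
    exact mul_ne_zero (fun h => hi ((CharP.cast_eq_zero_iff K p _).1 h)) hm'
  have h3 : pderiv i f ≠ 0 := by
    intro h
    apply h2
    rw [eulerDer_apply, h]; simp
  refine ⟨i, h3, ?_⟩
  have h4 : (eulerDer i f).totalDegree = (pderiv i f).totalDegree + 1 := by
    rw [eulerDer_apply, totalDegree_mul_of_isDomain (X_ne_zero i) h3, totalDegree_X, add_comm]
  rw [← h4]
  have h5 := le_totalDegree (mem_support_iff.2 h2)
  unfold totalDegree at h5 ⊢
  rw [hdeg]
  exact h5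

end CharPFacts

/-! ### Exactness of `b f^{p-1} df` and integration of parallel gradients -/

section Cartier

/-- The polynomial `((a+b)^p - a^p - b^p)/p` yields, for every derivation `D`, the relation
`(u+v)^(p-1) D(u+v) ≡ u^(p-1) D u + v^(p-1) D v` modulo the image of `D`. -/
lemma exists_add_pow_mul_derivation {K A : Type*} [CommRing K] [CommRing A] [Algebra K A]
    (p : ℕ) [hp : Fact p.Prime] (D : Derivation K A A) (u v : A) :
    ∃ r, (u + v) ^ (p - 1) * D (u + v) = u ^ (p - 1) * D u + v ^ (p - 1) * D v + D r := by
  obtain ⟨r, hr⟩ : ∃ r : MvPolynomial (Fin 2) ℤ,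
      (X 0 + X 1) ^ p = X 0 ^ p + X 1 ^ p + (p : MvPolynomial (Fin 2) ℤ) * r := by
    obtain ⟨r, hr⟩ := exists_add_pow_prime_eq hp.out (X 0 : MvPolynomial (Fin 2) ℤ) (X 1)
    exact ⟨X 0 * X 1 * r, by rw [hr]; ring⟩
  have hp0 : ((p : ℕ) : MvPolynomial (Fin 2) ℤ) ≠ 0 := by
    exact_mod_cast hp.out.ne_zero
  have h0 : (X 0 + X 1 : MvPolynomial (Fin 2) ℤ) ^ (p - 1) = X 0 ^ (p - 1) + pderiv 0 r := by
    have := congrArg (pderiv 0) hr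
    apply mul_left_cancel₀ hp0
    simpa [Derivation.leibniz_pow, pderiv_X, mul_add] using this
  have h1 : (X 0 + X 1 : MvPolynomial (Fin 2) ℤ) ^ (p - 1) = X 1 ^ (p - 1) + pderiv 1 r := by
    have := congrArg (pderiv 1) hr
    apply mul_left_cancel₀ hp0
    simpa [Derivation.leibniz_pow, pderiv_X, mul_add] using this
  have hD : ∀ s : MvPolynomial (Fin 2) ℤ, D (aeval ![u, v] s)
      = aeval ![u, v] (pderiv 0 s) * D u + aeval ![u, v] (pderiv 1 s) * D v := by
    intro s
    induction s using MvPolynomial.induction_on with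
    | C a => simp
    | add f g hf hg => simp only [map_add, hf, hg]; ring
    | mul_X f i hf => fin_cases i <;> simp [pderiv_X, hf] <;> ring
  refine ⟨aeval ![u, v] r, ?_⟩
  have h0' := congrArg (aeval ![u, v]) h0
  have h1' := congrArg (aeval ![u, v]) h1
  simp at h0' h1'
  rw [hD, map_add, mul_add]
  nth_rewrite 1 [h0']
  rw [h1']
  ring

/-- The logarithmic form of the Cartier operator: `f^(p-1) E f ≡ (E f)^p` modulo the image of
an Euler derivation `E`. -/
lemma exists_pow_mul_eulerDer {K : Type*} [CommRing K] (p : ℕ)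
    [hp : Fact p.Prime] [CharP K p] (i : Fin 2) (f : MvPolynomial (Fin 2) K) :
    ∃ r, f ^ (p - 1) * eulerDer i f = eulerDer i f ^ p + eulerDer i r := by
  have hfr : ∀ n : ℕ, (n : MvPolynomial (Fin 2) K) ^ p = n := by
    intro n
    have h1 : ((n : ZMod p)) ^ p = n := ZMod.pow_card _
    have := congrArg (ZMod.castHom dvd_rfl (MvPolynomial (Fin 2) K)) h1
    rwa [map_pow, map_natCast] at this
  induction f using MvPolynomial.induction_on' with
  | monomial s a =>
    refine ⟨0, ?_⟩
    rw [eulerDer_apply, X_mul_pderiv_monomial, map_zero, add_zero, nsmul_eq_mul, mul_pow, hfr,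
      mul_left_comm, ← pow_succ, Nat.sub_add_cancel hp.out.one_le]
  | add f g hf hg =>
    obtain ⟨r, hr⟩ := hf
    obtain ⟨s, hs⟩ := hg
    obtain ⟨t, ht⟩ := exists_add_pow_mul_derivation p (eulerDer i) f g
    refine ⟨r + s + t, ?_⟩
    rw [ht, hr, hs, map_add, map_add, map_add, add_pow_char]
    ring

variable {K : Type*} [CommRing K] [IsDomain K] (p : ℕ) [CharP K p]

/-- Powers of `f` below the `p`-th are linearly independent over `K[x^p,y^p]`. -/
lemma polynomial_eq_zero {f : MvPolynomial (Fin 2) K} (hf : f ∉ gradConst K) (n : ℕ) (hn : n < p) :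
    ∀ P : Polynomial (MvPolynomial (Fin 2) K), (∀ i, P.coeff i ∈ gradConst K) →
      P.natDegree ≤ n → P.eval f = 0 → P = 0 := by
  obtain ⟨j, hj⟩ : ∃ j, pderiv j f ≠ 0 := by
    by_contra h
    push Not at h
    exact hf ⟨h 0, h 1⟩
  have hder : ∀ P : Polynomial (MvPolynomial (Fin 2) K), (∀ i, P.coeff i ∈ gradConst K) →
      pderiv j (P.eval f) = P.derivative.eval f * pderiv j f := by
    intro P hP
    rw [Polynomial.eval_eq_sum_range, Polynomial.derivative_eval, Polynomial.sum_over_range _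
      (by simp), map_sum, Finset.sum_mul]
    refine Finset.sum_congr rfl fun i _ => ?_
    rw [derivation_const_mul _ (hP i), Derivation.leibniz_pow]
    simp
    ring
  induction n with
  | zero =>
    intro P hP hdeg h0
    rw [Polynomial.eq_C_of_natDegree_le_zero hdeg] at h0 ⊢
    simpa using h0
  | succ n ih =>
    intro P hP hdeg h0
    have h1 : P.derivative = 0 := by
      apply ih (by omega)
      · intro i
        rw [Polynomial.coeff_derivative]
        refine Subalgebra.mul_mem _ (hP _) ?_
        exact_mod_cast Subalgebra.natCast_mem (gradConst K) (i + 1)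
      · exact (Polynomial.natDegree_derivative_le P).trans (by omega)
      · have := hder P hP
        rw [h0, map_zero] at this
        exact (mul_eq_zero.1 this.symm).resolve_right hj
    have h2 : ∀ i, i ≠ 0 → P.coeff i = 0 := by
      intro i hi
      by_cases hip : n + 1 < i
      · exact Polynomial.coeff_eq_zero_of_natDegree_lt (by omega)
      · obtain ⟨k, rfl⟩ := Nat.exists_eq_succ_of_ne_zero hi
        have h3 := congrArg (fun Q => Polynomial.coeff Q k) h1
        simp only [Polynomial.coeff_derivative, Polynomial.coeff_zero, mul_eq_zero] at h3
        refine h3.resolve_right fun h4 => ?_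
        have h5 : ((k + 1 : ℕ) : MvPolynomial (Fin 2) K) = 0 := by exact_mod_cast h4
        rw [CharP.cast_eq_zero_iff _ p] at h5
        have := Nat.le_of_dvd (by omega) h5
        omega
    have h6 : P = Polynomial.C (P.coeff 0) := by
      ext1 i
      rw [Polynomial.coeff_C]
      split_ifs with hi
      · rw [hi]
      · exact h2 i hi
    rw [h6] at h0 ⊢
    simpa using h0

variable [hp : Fact p.Prime]

lemma eulerDer_eq_zero_of_sq (i : Fin 2) {g : MvPolynomial (Fin 2) K}
    (h : eulerDer i (eulerDer i g) = 0) : eulerDer i g = 0 := by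
  ext m
  have := congrArg (coeff m) h
  rw [coeff_eulerDer, coeff_zero, mul_eq_zero] at this
  rcases this with h | h
  · rw [coeff_eulerDer, h]; simp
  · simpa using h

/-- The form `b f^(p-1) df` with `b` constant is exact only if it vanishes. -/
lemma eq_zero_of_exact {f g b : MvPolynomial (Fin 2) K} (hf : f ∉ gradConst K)
    (hb : b ∈ gradConst K) (hg : ∀ i, pderiv i g = b * f ^ (p - 1) * pderiv i f) : b = 0 := by
  obtain ⟨i, hi⟩ : ∃ i, eulerDer i f ≠ 0 := by
    by_contra h
    push Not at h
    exact hf (mem_gradConst_iff_eulerDer.2 h)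
  obtain ⟨r, hr⟩ := exists_pow_mul_eulerDer p i f
  have h1 : eulerDer i g = b * eulerDer i f ^ p + eulerDer i (b * r) := by
    rw [derivation_const_mul _ hb, ← mul_add, ← hr, eulerDer_apply, eulerDer_apply, hg]
    ring
  have h2 : eulerDer i (g - b * r) = b * eulerDer i f ^ p := by
    rw [map_sub, h1]; ring
  have h3 := eulerDer_eq_zero_of_sq i (g := g - b * r)
    (by rw [h2]; exact derivation_of_mem _ (Subalgebra.mul_mem _ hb (pow_p_mem_gradConst p _)))
  rw [h2] at h3
  exact (mul_eq_zero.1 h3).resolve_right (pow_ne_zero _ hi)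

/-- Integration of gradients proportional to that of `f`: when the ratio is always a polynomial,
every `g` whose gradient is parallel to that of `f` is a polynomial in `f` of degree less than
`p` over `K[x^p,y^p]`. -/
lemma exists_sum_of_parallel {f : MvPolynomial (Fin 2) K} (hf : f ∉ gradConst K)
    (hpar : ∀ g : MvPolynomial (Fin 2) K, pderiv 0 f * pderiv 1 g = pderiv 1 f * pderiv 0 g →
      ∃ h, ∀ i, pderiv i g = h * pderiv i f) (n : ℕ) :
    ∀ g : MvPolynomial (Fin 2) K, g.totalDegree ≤ n →
      pderiv 0 f * pderiv 1 g = pderiv 1 f * pderiv 0 g →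
      ∃ b : ℕ → MvPolynomial (Fin 2) K, (∀ i, b i ∈ gradConst K) ∧
        g = ∑ i ∈ Finset.range p, b i * f ^ i := by
  obtain ⟨j, hj⟩ : ∃ j, pderiv j f ≠ 0 := by
    by_contra h
    push Not at h
    exact hf ⟨h 0, h 1⟩
  have hp1 : p = (p - 1) + 1 := (Nat.sub_add_cancel hp.out.one_le).symm
  have hconst : ∀ g ∈ gradConst K, ∃ b : ℕ → MvPolynomial (Fin 2) K,
      (∀ i, b i ∈ gradConst K) ∧ g = ∑ i ∈ Finset.range p, b i * f ^ i := by
    intro g hg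
    refine ⟨fun i => if i = 0 then g else 0, fun i => ?_, ?_⟩
    · dsimp only; split_ifs
      · exact hg
      · exact Subalgebra.zero_mem _
    · rw [hp1, Finset.sum_range_succ']
      simp
  -- A ratio `h` of nonzero gradients has smaller degree than `g`, hence the induction on degree.
  induction n with
  | zero =>
    intro g hg _
    apply hconst
    have : ∀ i, pderiv i g = 0 := by
      intro i
      by_contra h
      have := totalDegree_pderiv_lt h
      omega
    exact ⟨this 0, this 1⟩
  | succ n ih =>
    intro g hg hgf
    obtain ⟨h, hh⟩ := hpar g hgf
    by_cases hz : h = 0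
    · apply hconst
      constructor <;> simp [hh, hz]
    have hdeg : h.totalDegree ≤ n := by
      have h1 : pderiv j g ≠ 0 := by rw [hh]; exact mul_ne_zero hz hj
      have h2 := totalDegree_pderiv_lt h1
      rw [hh, totalDegree_mul_of_isDomain hz hj] at h2
      omega
    have hhf : pderiv 0 f * pderiv 1 h = pderiv 1 f * pderiv 0 h := by
      have h1 := pderiv_comm01 g
      rw [hh, hh, pderiv_mul, pderiv_mul, pderiv_comm01 f] at h1
      linear_combination -h1
    obtain ⟨b, hb, hbs⟩ := ih h hdeg hhf
    -- The inverse of `i + 1` in the prime field, for `i + 1 < p`.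
    let inv : ℕ → MvPolynomial (Fin 2) K := fun i => ZMod.castHom dvd_rfl _ ((i + 1 : ℕ) : ZMod p)⁻¹
    have hinv : ∀ i, i < p - 1 → inv i * ((i : MvPolynomial (Fin 2) K) + 1) = 1 := by
      intro i hi
      have h1 : ((i + 1 : ℕ) : ZMod p) ≠ 0 := by
        rw [Ne, ZMod.natCast_eq_zero_iff]
        intro h
        have := Nat.le_of_dvd (by omega) h
        omega
      have h2 := congrArg (ZMod.castHom dvd_rfl (MvPolynomial (Fin 2) K)) (inv_mul_cancel₀ h1)
      rw [map_mul, map_one, map_natCast] at h2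
      simpa [inv] using h2
    have hinvm : ∀ i, inv i ∈ gradConst K := by
      intro i
      have : inv i = ((((i + 1 : ℕ) : ZMod p)⁻¹).val : MvPolynomial (Fin 2) K) := by
        simp [inv, ZMod.castHom_apply, ZMod.natCast_val]
      rw [this]
      exact Subalgebra.natCast_mem _ _
    set g' := g - ∑ i ∈ Finset.range (p - 1), (b i * inv i) * f ^ (i + 1) with hg'
    have hder : ∀ k, pderiv k g' = b (p - 1) * f ^ (p - 1) * pderiv k f := by
      intro k
      have h1 : pderiv k (∑ i ∈ Finset.range (p - 1), (b i * inv i) * f ^ (i + 1))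
          = (∑ i ∈ Finset.range (p - 1), b i * f ^ i) * pderiv k f := by
        rw [map_sum, Finset.sum_mul]
        refine Finset.sum_congr rfl fun i hi => ?_
        rw [derivation_const_mul _ (Subalgebra.mul_mem _ (hb i) (hinvm i)),
          Derivation.leibniz_pow]
        simp only [Nat.add_sub_cancel, smul_eq_mul, nsmul_eq_mul, Nat.cast_add, Nat.cast_one]
        linear_combination (b i * f ^ i * pderiv k f) * hinv i (Finset.mem_range.1 hi)
      rw [hg', map_sub, h1, hh, hbs]
      conv_lhs => rw [hp1, Finset.sum_range_succ]
      simp only [Nat.add_sub_cancel]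
      ring
    have hb0 := eq_zero_of_exact p hf (hb _) hder
    have hg'm : g' ∈ gradConst K := by
      constructor <;> simp [hder, hb0]
    refine ⟨fun i => if i = 0 then g' else b (i - 1) * inv (i - 1), fun i => ?_, ?_⟩
    · dsimp only; split_ifs
      · exact hg'm
      · exact Subalgebra.mul_mem _ (hb _) (hinvm _)
    · conv_rhs => rw [hp1, Finset.sum_range_succ']
      simp [hg']

end Cartier

/-! ### Differentials in purely inseparable extensions of exponent one -/

section Inseparable

open IntermediateField

lemma finrank_adjoin_eq {M E : Type*} [Field M] [Field E] [Algebra M E] (p : ℕ)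
    [hp : Fact p.Prime] [CharP E p] (hpow : ∀ s : E, s ^ p ∈ (algebraMap M E).range)
    {s : E} (hs : s ∉ (algebraMap M E).range) :
    IsIntegral M s ∧ Module.finrank M M⟮s⟯ = p := by
  obtain ⟨a, ha⟩ := hpow s
  have hirr : Irreducible (Polynomial.X ^ p - Polynomial.C a : Polynomial M) := by
    apply X_pow_sub_C_irreducible_of_prime hp.out
    intro b hb
    apply hs
    refine ⟨b, ?_⟩
    have h1 : (algebraMap M E b) ^ p = s ^ p := by rw [← map_pow, hb, ha]
    exact frobenius_inj E p h1
  have hmonic : (Polynomial.X ^ p - Polynomial.C a : Polynomial M).Monic :=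
    Polynomial.monic_X_pow_sub_C a hp.out.ne_zero
  have hroot : Polynomial.aeval s (Polynomial.X ^ p - Polynomial.C a : Polynomial M) = 0 := by
    simp [ha]
  have hint : IsIntegral M s := ⟨_, hmonic, by simpa [Polynomial.aeval_def] using hroot⟩
  refine ⟨hint, ?_⟩
  rw [adjoin.finrank hint, ← minpoly.eq_of_irreducible_of_monic hirr hroot hmonic,
    Polynomial.natDegree_X_pow_sub_C]

/-- In a purely inseparable extension of exponent one, an element with vanishing differential over
every intermediate field lies in the base field: over a subfield `M` maximal without `t` the
extension is `M(t)`, so `dt = 0` would make it unramified. -/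
lemma mem_of_differential_eq_zero {E : Type*} [Field E] (p : ℕ) [hp : Fact p.Prime] [CharP E p]
    (F : Subfield E) (hF : ∀ s : E, s ^ p ∈ F) (t : E)
    (ht : ∀ M : Subfield E, F ≤ M → KaehlerDifferential.D M E t = 0) : t ∈ F := by
  by_contra htF
  obtain ⟨M, hFM, hM⟩ := zorn_le_nonempty₀ {M : Subfield E | t ∉ M} (by
    intro c hc hchain y hy
    refine ⟨sSup c, ?_, fun z hz => le_sSup hz⟩
    intro hmem
    rw [Subfield.mem_sSup_of_directedOn ⟨y, hy⟩ hchain.directedOn] at hmem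
    obtain ⟨N, hN, hN'⟩ := hmem
    exact hc hN hN') F htF
  have htM : t ∉ M := hM.prop
  have hrange : ∀ s : E, s ∈ (algebraMap M E).range ↔ s ∈ M := by
    intro s
    constructor
    · rintro ⟨a, rfl⟩; exact a.2
    · intro h; exact ⟨⟨s, h⟩, rfl⟩
  have hpow : ∀ s : E, s ^ p ∈ (algebraMap M E).range := fun s => (hrange _).2 (hFM (hF s))
  obtain ⟨htint, htrank⟩ := finrank_adjoin_eq (M := M) p hpow (s := t) (by rwa [hrange])
  have htop : M⟮t⟯ = ⊤ := by
    rw [eq_top_iff]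
    intro s _
    by_cases hs : s ∈ M
    · exact M⟮t⟯.algebraMap_mem ⟨s, hs⟩
    obtain ⟨hsint, hsrank⟩ := finrank_adjoin_eq (M := M) p hpow (s := s) (by rwa [hrange])
    have h1 : t ∈ M⟮s⟯ := by
      by_contra h
      have hle : M ≤ M⟮s⟯.toSubfield := fun a ha => M⟮s⟯.algebraMap_mem ⟨a, ha⟩
      exact hs (hM.le_of_ge (y := M⟮s⟯.toSubfield) h hle (mem_adjoin_simple_self M s))
    have h2 : M⟮t⟯ ≤ M⟮s⟯ := adjoin_simple_le_iff.2 h1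
    have := adjoin.finiteDimensional hsint
    rw [eq_of_le_of_finrank_eq h2 (by rw [htrank, hsrank])]
    exact mem_adjoin_simple_self M s
  have hD : ∀ s : E, KaehlerDifferential.D M E s = 0 := by
    intro s
    have hs : s ∈ M⟮t⟯ := by rw [htop]; trivial
    induction hs using adjoin_induction with
    | mem x hx => rw [Set.mem_singleton_iff.1 hx]; exact ht M hFM
    | algebraMap x => exact Derivation.map_algebraMap _ x
    | add x y _ _ hx hy => rw [map_add, hx, hy, add_zero]
    | inv x _ hx => rw [Derivation.leibniz_inv, hx, smul_zero]
    | mul x y _ _ hx hy => rw [Derivation.leibniz, hx, hy]; simp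
  have : Algebra.FormallyUnramified M E := by
    refine ⟨?_⟩
    rw [← Submodule.subsingleton_iff E, ← subsingleton_iff_bot_eq_top,
      ← KaehlerDifferential.span_range_derivation, eq_comm, Submodule.span_eq_bot]
    rintro _ ⟨s, rfl⟩
    exact hD s
  have : FiniteDimensional M E := by
    have := adjoin.finiteDimensional htint
    rw [htop] at this
    exact LinearEquiv.finiteDimensional (topEquiv (F := M) (E := E)).toLinearEquiv
  have : IsPurelyInseparable M E := by
    have : CharP M p := inferInstance
    rw [isPurelyInseparable_iff_pow_mem M p]
    intro s
    exact ⟨1, by simpa using hpow s⟩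
  have := Algebra.FormallyUnramified.range_eq_top_of_isPurelyInseparable M E
  apply htM
  rw [← hrange, this]
  trivial

end Inseparable

/-! ### Reduction modulo a prime and the algebra `K[x^p,y^p,f]` -/

section Divisibility

variable {K : Type*} [CommRing K]

/-- Modulo a prime `q` dividing the gradient of `f`, the class of `f` is a quotient of classes
from `K[x^p,y^p]`. -/
lemma exists_residue_relation (p : ℕ) [hp : Fact p.Prime] [CharP K p]
    {q f : MvPolynomial (Fin 2) K} (hq : Prime q) (hqf : ∀ i, q ∣ pderiv i f) :
    ∃ w ∈ gradConst K, ∃ u ∈ gradConst K, ¬ q ∣ w ∧ q ∣ w * f - u := by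
  have hprime : (Ideal.span {q}).IsPrime := (Ideal.span_singleton_prime hq.ne_zero).2 hq
  let E := FractionRing (MvPolynomial (Fin 2) K ⧸ Ideal.span {q})
  let φ : MvPolynomial (Fin 2) K →+* E :=
    (algebraMap (MvPolynomial (Fin 2) K ⧸ Ideal.span {q}) E).comp (Ideal.Quotient.mk _)
  have hφ : ∀ g, φ g = 0 ↔ q ∣ g := by
    intro g
    rw [RingHom.comp_apply, map_eq_zero_iff _ (IsFractionRing.injective _ _),
      Ideal.Quotient.eq_zero_iff_mem, Ideal.mem_span_singleton]
  have hchar : CharP E p := by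
    rw [CharP.charP_iff_prime_eq_zero hp.out]
    rw [← map_natCast φ p, CharP.cast_eq_zero, map_zero]
  let F : Subfield E := Subfield.closure (((gradConst K).toSubring.map φ : Subring E) : Set E)
  have hBF : ∀ b ∈ gradConst K, φ b ∈ F := fun b hb =>
    Subfield.subset_closure ⟨b, hb, rfl⟩
  have hF : ∀ s : E, s ^ p ∈ F := by
    intro s
    obtain ⟨a, b, _, rfl⟩ := IsFractionRing.div_surjective
      (A := MvPolynomial (Fin 2) K ⧸ Ideal.span {q}) s
    obtain ⟨a, rfl⟩ := Ideal.Quotient.mk_surjective a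
    obtain ⟨b, rfl⟩ := Ideal.Quotient.mk_surjective b
    have : (algebraMap _ E (Ideal.Quotient.mk (Ideal.span {q}) a)
        / algebraMap _ E (Ideal.Quotient.mk (Ideal.span {q}) b)) ^ p
        = φ (a ^ p) / φ (b ^ p) := by
      rw [div_pow, map_pow, map_pow]; rfl
    rw [this]
    exact F.div_mem (hBF _ (pow_p_mem_gradConst p a)) (hBF _ (pow_p_mem_gradConst p b))
  have hD : ∀ M : Subfield E, F ≤ M → ∀ g, KaehlerDifferential.D M E (φ g)
      = φ (pderiv 0 g) • KaehlerDifferential.D M E (φ (X 0))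
        + φ (pderiv 1 g) • KaehlerDifferential.D M E (φ (X 1)) := by
    intro M hM g
    induction g using MvPolynomial.induction_on with
    | C a =>
      have h1 : φ (C a) ∈ M := hM (hBF _ ((gradConst K).algebraMap_mem a))
      have h2 : KaehlerDifferential.D M E (φ (C a)) = 0 :=
        Derivation.map_algebraMap (KaehlerDifferential.D M E) (⟨_, h1⟩ : M)
      simp [h2]
    | add f g hf hg => simp only [map_add, hf, hg, add_smul]; abel
    | mul_X f i hf =>
      fin_cases i <;> simp [pderiv_X, hf, smul_add, add_smul, mul_smul] <;> abel
  have hmem : φ f ∈ F := by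
    apply mem_of_differential_eq_zero p F hF
    intro M hM
    rw [hD M hM, (hφ _).2 (hqf 0), (hφ _).2 (hqf 1)]
    simp
  rw [Subfield.mem_closure_iff, Subring.closure_eq] at hmem
  obtain ⟨_, ⟨u, hu, rfl⟩, _, ⟨w, hw, rfl⟩, huw⟩ := hmem
  by_cases hw0 : φ w = 0
  · refine ⟨1, Subalgebra.one_mem _, 0, Subalgebra.zero_mem _, ?_, ?_⟩
    · exact fun h => hq.not_isUnit (isUnit_of_dvd_one h)
    · rw [hw0, div_zero] at huw
      rw [one_mul, sub_zero, ← hφ, huw]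
  · refine ⟨w, hw, u, hu, fun h => hw0 ((hφ w).2 h), ?_⟩
    rw [← hφ, map_sub, map_mul, ← huw, mul_div_cancel₀ _ hw0, sub_self]

variable [IsDomain K]

/-- Since `f^p` lies in `K[x^p,y^p]`, powers of `f` from the `p`-th on are redundant in
`K[x^p,y^p,f]`. -/
lemma exists_polynomial_of_mem_adjoin (p : ℕ) [hp : Fact p.Prime] [CharP K p]
    {f g : MvPolynomial (Fin 2) K}
    (hg : g ∈ Algebra.adjoin K ({X 0 ^ p, X 1 ^ p, f} : Set (MvPolynomial (Fin 2) K))) :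
    ∃ P : Polynomial (MvPolynomial (Fin 2) K), (∀ i, P.coeff i ∈ gradConst K) ∧
      P.natDegree < p ∧ P.eval f = g := by
  have h1 : ∃ P : Polynomial (gradConst K), Polynomial.aeval f P = g := by
    induction hg using Algebra.adjoin_induction with
    | mem x hx =>
      rcases hx with rfl | rfl | rfl
      · exact ⟨Polynomial.C ⟨_, pow_p_mem_gradConst p (X 0)⟩, by
          rw [Polynomial.aeval_C]; rfl⟩
      · exact ⟨Polynomial.C ⟨_, pow_p_mem_gradConst p (X 1)⟩, by
          rw [Polynomial.aeval_C]; rfl⟩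
      · exact ⟨Polynomial.X, by simp⟩
    | algebraMap r => exact ⟨Polynomial.C (algebraMap K _ r), by rw [Polynomial.aeval_C]; rfl⟩
    | add x y _ _ hx hy =>
      obtain ⟨P, rfl⟩ := hx
      obtain ⟨Q, rfl⟩ := hy
      exact ⟨P + Q, by simp⟩
    | mul x y _ _ hx hy =>
      obtain ⟨P, rfl⟩ := hx
      obtain ⟨Q, rfl⟩ := hy
      exact ⟨P * Q, by simp⟩
  obtain ⟨P, rfl⟩ := h1
  let c : gradConst K := ⟨_, pow_p_mem_gradConst p f⟩
  have hmonic : (Polynomial.X ^ p - Polynomial.C c).Monic :=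
    Polynomial.monic_X_pow_sub_C c hp.out.ne_zero
  have hroot : Polynomial.aeval f (Polynomial.X ^ p - Polynomial.C c) = 0 := by
    rw [Polynomial.aeval_def, Polynomial.eval₂_sub, Polynomial.eval₂_X_pow, Polynomial.eval₂_C]
    exact sub_self _
  refine ⟨(P %ₘ (Polynomial.X ^ p - Polynomial.C c)).map (algebraMap (gradConst K) _), ?_, ?_, ?_⟩
  · intro i
    rw [Polynomial.coeff_map]
    exact Subtype.property _
  · refine lt_of_le_of_lt Polynomial.natDegree_map_le ?_
    have h2 := Polynomial.natDegree_modByMonic_lt P hmonic (by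
      intro h
      have := congrArg Polynomial.natDegree h
      rw [Polynomial.natDegree_X_pow_sub_C, Polynomial.natDegree_one] at this
      exact hp.out.ne_zero this)
    rwa [Polynomial.natDegree_X_pow_sub_C] at h2
  · rw [Polynomial.eval_map_algebraMap, Polynomial.aeval_modByMonic_eq_self_of_root hroot]

/-- The syzygies of a coprime pair `(a, b)` are the multiples of `(b, -a)`. With `a = d x`,
`b = d y` and `(u, v)` the gradient of `f`, the relation `u a + v b = 0` reads `d f = 0`. -/
lemma exists_factor_of_isRelPrime {A : Type*} [CommRing A] [IsDomain A] [DecompositionMonoid A]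
    {a b u v : A} (hab : IsRelPrime a b) (h : u * a + v * b = 0) :
    ∃ r, u = r * b ∧ v = -(r * a) := by
  by_cases hb : b = 0
  · subst hb
    have ha : IsUnit a := isRelPrime_zero_right.1 hab
    obtain ⟨a, rfl⟩ := ha
    refine ⟨-(v * ↑a⁻¹), ?_, by simp⟩
    simpa using h
  · have h1 : b ∣ u := hab.symm.dvd_of_dvd_mul_right (z := a) ⟨-v, by linear_combination h⟩
    obtain ⟨r, rfl⟩ := h1
    refine ⟨r, mul_comm _ _, ?_⟩
    apply mul_right_cancel₀ hb
    linear_combination h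

end Divisibility

/-! ### The implications between the four conditions -/

section Implications

variable {K : Type*} [CommRing K] [IsDomain K] [UniqueFactorizationMonoid K]
  (p : ℕ) [hp : Fact p.Prime] [CharP K p]

set_option linter.unusedSectionVars false

/-- A prime `q` dividing the gradient of `f` produces a polynomial expression in `f`
of degree `k < p`, namely `(w f - u)^k` with `q ∤ w`, that is divisible by an element
`π ∈ K[x^p,y^p]` with `q ∣ π`. -/
lemma exists_divisible_power {q f : MvPolynomial (Fin 2) K} (hq : Prime q)
    (hqf : ∀ i, q ∣ pderiv i f) :
    ∃ w ∈ gradConst K, ∃ u ∈ gradConst K, ∃ π ∈ gradConst K, ∃ k < p,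
      ¬ q ∣ w ∧ q ∣ π ∧ π ≠ 0 ∧ π ∣ (w * f - u) ^ k := by
  obtain ⟨w, hw, u, hu, hqw, s, hs⟩ := exists_residue_relation p hq hqf
  by_cases hqB : q ∈ gradConst K
  · exact ⟨w, hw, u, hu, q, hqB, 1, hp.out.one_lt, hqw, dvd_rfl, hq.ne_zero,
      by rw [pow_one, hs]; exact dvd_mul_right _ _⟩
  obtain ⟨j, hj⟩ : ∃ j, pderiv j q ≠ 0 := by
    by_contra h
    push Not at h
    exact hqB ⟨h 0, h 1⟩
  have hqj : ¬ q ∣ pderiv j q := by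
    rintro ⟨r, hr⟩
    have h1 := totalDegree_pderiv_lt hj
    have hr0 : r ≠ 0 := by
      rintro rfl
      exact hj (by rw [hr, mul_zero])
    rw [hr, totalDegree_mul_of_isDomain hq.ne_zero hr0] at h1
    omega
  -- Differentiating `w f - u = q s` shows that `q` divides `s`, so `w f - u` vanishes doubly.
  have hqs : q ∣ s := by
    have h1 := congrArg (pderiv j) hs
    rw [map_sub, derivation_const_mul _ hw, pderiv_of_mem hu, sub_zero, pderiv_mul] at h1
    have h2 : q ∣ pderiv j q * s := by
      obtain ⟨r, hr⟩ := hqf j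
      exact ⟨w * r - pderiv j s, by linear_combination w * hr - h1⟩
    exact (hq.dvd_or_dvd h2).resolve_left hqj
  obtain ⟨s', rfl⟩ := hqs
  refine ⟨w, hw, u, hu, q ^ p, pow_p_mem_gradConst p q, (p + 1) / 2, ?_, hqw,
    dvd_pow_self q hp.out.ne_zero, pow_ne_zero _ hq.ne_zero, ?_⟩
  · have := hp.out.two_le
    omega
  · have h3 : w * f - u = q ^ 2 * s' := by rw [hs]; ring
    rw [h3, mul_pow, ← pow_mul]
    exact dvd_mul_of_dvd_left (pow_dvd_pow q (by omega)) _

variable {d : Derivation K (MvPolynomial (Fin 2) K) (MvPolynomial (Fin 2) K)}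
  {f : MvPolynomial (Fin 2) K}

lemma isRelPrime_of_unit {a b h : MvPolynomial (Fin 2) K} (hab : IsRelPrime a b)
    (hh : IsUnit h) (h0 : pderiv 0 f = h * b) (h1 : pderiv 1 f = -(h * a)) :
    IsRelPrime (pderiv 0 f) (pderiv 1 f) := by
  intro q hq0 hq1
  rw [h0, hh.dvd_mul_left] at hq0
  rw [h1, dvd_neg, hh.dvd_mul_left] at hq1
  exact hab hq1 hq0

/-- If the gradient `h (d y, -d x)` of `f` had a prime factor `q ∣ h`, the quotient
`(w f - u)^k / π` from `exists_divisible_power` would be a constant of `d` outside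
`K[x^p,y^p,f]`. -/
lemma isRelPrime_of_ker_eq (hcop : IsRelPrime (d (X 0)) (d (X 1))) (hf : f ∉ gradConst K)
    (hker : {q : MvPolynomial (Fin 2) K | d q = 0} =
        ↑(Algebra.adjoin K ({X 0 ^ p, X 1 ^ p, f} : Set (MvPolynomial (Fin 2) K)))) :
    d f = 0 ∧ IsRelPrime (pderiv 0 f) (pderiv 1 f) := by
  have hdf : d f = 0 := by
    have : f ∈ {q : MvPolynomial (Fin 2) K | d q = 0} := by
      rw [hker]
      exact Algebra.subset_adjoin (by simp)
    exact this
  refine ⟨hdf, ?_⟩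
  obtain ⟨h, h0, h1⟩ := exists_factor_of_isRelPrime hcop
    ((derivation_apply_eq d f).symm.trans hdf)
  refine isRelPrime_of_unit hcop ?_ h0 h1
  by_contra hu
  have hne : h ≠ 0 := by
    rintro rfl
    exact hf ⟨by rw [h0, zero_mul], by rw [h1, zero_mul, neg_zero]⟩
  obtain ⟨q, hqi, hqh⟩ := WfDvdMonoid.exists_irreducible_factor hu hne
  have hqf : ∀ i, q ∣ pderiv i f := by
    rw [Fin.forall_fin_two, h0, h1, dvd_neg]
    exact ⟨dvd_mul_of_dvd_left hqh _, dvd_mul_of_dvd_left hqh _⟩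
  obtain ⟨w, hw, u, hu, π, hπ, k, hk, hqw, hqπ, hπ0, g, hg⟩ :=
    exists_divisible_power p hqi.prime hqf
  have hdg : d g = 0 := by
    have h2 := congrArg d hg
    rw [derivation_const_mul _ hπ, Derivation.leibniz_pow, map_sub, derivation_const_mul _ hw, hdf,
      derivation_of_mem d hu] at h2
    simp only [mul_zero, sub_zero, smul_zero] at h2
    exact (mul_eq_zero.1 h2.symm).resolve_left hπ0
  have hgm : g ∈ (↑(Algebra.adjoin K ({X 0 ^ p, X 1 ^ p, f} :
      Set (MvPolynomial (Fin 2) K))) : Set (MvPolynomial (Fin 2) K)) := by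
    rw [← hker]; exact hdg
  obtain ⟨P, hP, hPdeg, hPf⟩ := exists_polynomial_of_mem_adjoin p hgm
  -- Compare the two expansions of `(w f - u)^k` over `K[x^p,y^p]`.
  let L : Polynomial (MvPolynomial (Fin 2) K) := Polynomial.C w * Polynomial.X - Polynomial.C u
  have hLB : ∀ n i, (L ^ n).coeff i ∈ gradConst K := by
    let L' : Polynomial (gradConst K) :=
      Polynomial.C ⟨w, hw⟩ * Polynomial.X - Polynomial.C ⟨u, hu⟩
    have hL : L = L'.map (gradConst K).toSubring.subtype := by
      rw [Polynomial.map_sub, Polynomial.map_mul, Polynomial.map_C, Polynomial.map_C,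
        Polynomial.map_X]
      rfl
    intro n i
    rw [hL, ← Polynomial.map_pow, Polynomial.coeff_map]
    exact Subtype.property _
  have hLdeg : L.natDegree ≤ 1 := by
    refine (Polynomial.natDegree_sub_le _ _).trans (max_le ?_ (by simp))
    exact (Polynomial.natDegree_C_mul_le _ _).trans Polynomial.natDegree_X_le
  have hzero : L ^ k - Polynomial.C π * P = 0 := by
    refine polynomial_eq_zero p hf (p - 1) (by have := hp.out.two_le; omega) _ ?_ ?_ ?_
    · intro i
      rw [Polynomial.coeff_sub, Polynomial.coeff_C_mul]
      exact Subalgebra.sub_mem _ (hLB _ _) (Subalgebra.mul_mem _ hπ (hP i))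
    · refine (Polynomial.natDegree_sub_le _ _).trans (max_le ?_ ?_)
      · exact (Polynomial.natDegree_pow_le_of_le k hLdeg).trans (by omega)
      · exact (Polynomial.natDegree_C_mul_le _ _).trans (by omega)
    · simp [L, hg, hPf]
  have hcoeff := congrArg (fun Q => Polynomial.coeff Q k) hzero
  simp only [Polynomial.coeff_sub, Polynomial.coeff_C_mul, Polynomial.coeff_zero] at hcoeff
  have hLk : (L ^ k).coeff k = w ^ k := by
    have := Polynomial.coeff_pow_of_natDegree_le (m := k) hLdeg
    rw [mul_one] at this
    rw [this]
    simp [L]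
  rw [hLk] at hcoeff
  apply hqw
  apply hqi.prime.dvd_of_dvd_pow (n := k)
  rw [sub_eq_zero.1 hcoeff]
  exact dvd_mul_of_dvd_left hqπ _

/-- For coprime partial derivatives, vanishing of `d f` forces the gradient of `f` to be a unit
multiple of `(d y, -d x)`. -/
lemma exists_unit_gradient (hcop : IsRelPrime (d (X 0)) (d (X 1))) (hdf : d f = 0)
    (hrel : IsRelPrime (pderiv 0 f) (pderiv 1 f)) :
    ∃ h, IsUnit h ∧ pderiv 0 f = h * d (X 1) ∧ pderiv 1 f = -(h * d (X 0)) := by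
  obtain ⟨h, h0, h1⟩ := exists_factor_of_isRelPrime hcop
    ((derivation_apply_eq d f).symm.trans hdf)
  refine ⟨h, hrel ?_ ?_, h0, h1⟩
  · rw [h0]; exact dvd_mul_right _ _
  · rw [h1, dvd_neg]; exact dvd_mul_right _ _

lemma exists_parallel_factor (hcop : IsRelPrime (d (X 0)) (d (X 1))) (hdf : d f = 0)
    (hrel : IsRelPrime (pderiv 0 f) (pderiv 1 f)) {g : MvPolynomial (Fin 2) K} (hg : d g = 0) :
    ∃ r, ∀ i, pderiv i g = r * pderiv i f := by
  obtain ⟨h, ⟨h, rfl⟩, h0, h1⟩ := exists_unit_gradient hcop hdf hrel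
  obtain ⟨r, r0, r1⟩ := exists_factor_of_isRelPrime hcop
    ((derivation_apply_eq d g).symm.trans hg)
  have hh : (↑h⁻¹ : MvPolynomial (Fin 2) K) * h = 1 := h.inv_mul
  refine ⟨r * ↑h⁻¹, ?_⟩
  rw [Fin.forall_fin_two, h0, h1, r0, r1]
  constructor
  · linear_combination (-r * d (X 1)) * hh
  · linear_combination (r * d (X 0)) * hh

lemma ker_eq_of_isRelPrime (hcop : IsRelPrime (d (X 0)) (d (X 1))) (hf : f ∉ gradConst K)
    (hdf : d f = 0) (hrel : IsRelPrime (pderiv 0 f) (pderiv 1 f)) :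
    {q : MvPolynomial (Fin 2) K | d q = 0} =
        ↑(Algebra.adjoin K ({X 0 ^ p, X 1 ^ p, f} : Set (MvPolynomial (Fin 2) K))) := by
  ext g
  simp only [Set.mem_ofPred_eq, SetLike.mem_coe]
  constructor
  · intro hg
    have hpar : ∀ g : MvPolynomial (Fin 2) K,
        pderiv 0 f * pderiv 1 g = pderiv 1 f * pderiv 0 g →
        ∃ h, ∀ i, pderiv i g = h * pderiv i f := by
      intro g hg
      apply exists_parallel_factor hcop hdf hrel
      obtain ⟨h, hh, h0, h1⟩ := exists_unit_gradient hcop hdf hrel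
      rw [h0, h1] at hg
      apply hh.mul_left_cancel
      rw [derivation_apply_eq d g, mul_zero]
      linear_combination hg
    obtain ⟨r, hr⟩ := exists_parallel_factor hcop hdf hrel hg
    obtain ⟨b, hb, hbs⟩ := exists_sum_of_parallel p hf hpar g.totalDegree g le_rfl
      (by rw [hr, hr]; ring)
    rw [hbs]
    refine Subalgebra.sum_mem _ fun i _ => Subalgebra.mul_mem _ ?_
      (Subalgebra.pow_mem _ (Algebra.subset_adjoin (by simp)) _)
    have := hb i
    rw [gradConst_eq_adjoin p] at this
    exact Algebra.adjoin_mono (by intro x; simp; tauto) this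
  · intro hg
    induction hg using Algebra.adjoin_induction with
    | mem x hx =>
      rcases hx with rfl | rfl | rfl
      · exact derivation_of_mem d (pow_p_mem_gradConst p _)
      · exact derivation_of_mem d (pow_p_mem_gradConst p _)
      · exact hdf
    | algebraMap r => exact d.map_algebraMap r
    | add x y _ _ hx hy => rw [map_add, hx, hy, add_zero]
    | mul x y _ _ hx hy => rw [d.leibniz, hx, hy]; simp

lemma exists_eq_C_of_isUnit {h : MvPolynomial (Fin 2) K} (hh : IsUnit h) :
    ∃ c : K, IsUnit c ∧ h = C c :=
  MvPolynomial.isUnit_iff_eq_C_of_isReduced.1 hh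

lemma jacobian_of_isRelPrime (hcop : IsRelPrime (d (X 0)) (d (X 1)))
    (hdf : d f = 0) (hrel : IsRelPrime (pderiv 0 f) (pderiv 1 f)) :
    ∃ c : K, IsUnit c ∧ ∀ g,
        d g = C c * (pderiv (0 : Fin 2) f * pderiv (1 : Fin 2) g
                   - pderiv (1 : Fin 2) f * pderiv (0 : Fin 2) g) := by
  obtain ⟨h, hh, h0, h1⟩ := exists_unit_gradient hcop hdf hrel
  obtain ⟨c, hc, rfl⟩ := exists_eq_C_of_isUnit hh
  obtain ⟨c, rfl⟩ := hc
  refine ⟨↑c⁻¹, Units.isUnit _, fun g => ?_⟩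
  have hcc : (C (↑c⁻¹ : K) * C (c : K) : MvPolynomial (Fin 2) K) = 1 := by
    rw [← C_mul, c.inv_mul, C_1]
  rw [derivation_apply_eq d g, h0, h1]
  linear_combination (-(pderiv 0 g * d (X 0) + pderiv 1 g * d (X 1))) * hcc

lemma isRelPrime_of_jacobian (hcop : IsRelPrime (d (X 0)) (d (X 1)))
    (h : ∃ c : K, IsUnit c ∧ ∀ g,
        d g = C c * (pderiv (0 : Fin 2) f * pderiv (1 : Fin 2) g
                   - pderiv (1 : Fin 2) f * pderiv (0 : Fin 2) g)) :
    d f = 0 ∧ IsRelPrime (pderiv 0 f) (pderiv 1 f) := by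
  obtain ⟨c, hc, hd⟩ := h
  refine ⟨by rw [hd]; ring, fun q h0 h1 => hcop ?_ ?_⟩
  · rw [hd]
    exact dvd_mul_of_dvd_right (dvd_sub (dvd_mul_of_dvd_left h0 _) (dvd_mul_of_dvd_left h1 _)) _
  · rw [hd]
    exact dvd_mul_of_dvd_right (dvd_sub (dvd_mul_of_dvd_left h0 _) (dvd_mul_of_dvd_left h1 _)) _

lemma pderiv_sub_pPart (g : MvPolynomial (Fin 2) K) (i : Fin 2) :
    pderiv i (g - pPart p g) = pderiv i g := by
  rw [map_sub, pderiv_of_mem (pPart_mem_gradConst p g), sub_zero]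

lemma derivation_sub_pPart (g : MvPolynomial (Fin 2) K) :
    d (g - pPart p g) = d g := by
  rw [map_sub, derivation_of_mem d (pPart_mem_gradConst p g), sub_zero]

/-- Any other constant of `d` has gradient `r · grad f`, hence degree at least that of
`f - f_{(p)}` unless `r = 0`. -/
lemma minimal_of_isRelPrime (hcop : IsRelPrime (d (X 0)) (d (X 1))) (hf : f ∉ gradConst K)
    (hdf : d f = 0) (hrel : IsRelPrime (pderiv 0 f) (pderiv 1 f)) :
    pderiv (0 : Fin 2) (d (X 0)) + pderiv (1 : Fin 2) (d (X 1)) = 0 ∧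
        f - pPart p f ≠ 0 ∧
        d (f - pPart p f) = 0 ∧
        (∀ h : MvPolynomial (Fin 2) K, h - pPart p h ≠ 0 → d (h - pPart p h) = 0 →
          (f - pPart p f).totalDegree ≤ (h - pPart p h).totalDegree) ∧
        (∀ k : K, k ≠ 0 → C k ∣ (f - pPart p f) → IsUnit k) := by
  have hf0 : f - pPart p f ≠ 0 := fun h =>
    hf ((pPart_eq_self_iff p).1 (sub_eq_zero.1 h).symm)
  refine ⟨?_, hf0, by rw [derivation_sub_pPart, hdf], ?_, ?_⟩
  · obtain ⟨c, -, hd⟩ := jacobian_of_isRelPrime hcop hdf hrel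
    rw [hd (X 0), hd (X 1)]
    simp only [pderiv_C_mul, pderiv_X, map_sub]
    simp [pderiv_comm01]
  · intro h hh hdh
    obtain ⟨r, hr⟩ := exists_parallel_factor hcop hdf hrel hdh
    obtain ⟨i, hi, hdeg⟩ := exists_totalDegree_le_pderiv p hf0 (pPart_sub_self p f)
    rw [pderiv_sub_pPart] at hi hdeg
    have hr0 : r ≠ 0 := by
      rintro rfl
      apply hh
      have h1 : h - pPart p h ∈ gradConst K := ⟨by rw [hr, zero_mul], by rw [hr, zero_mul]⟩
      rw [← (pPart_eq_self_iff p).2 h1, pPart_sub_self]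
    have h2 : pderiv i (h - pPart p h) ≠ 0 := by rw [hr]; exact mul_ne_zero hr0 hi
    have h3 := totalDegree_pderiv_lt h2
    rw [hr, totalDegree_mul_of_isDomain hr0 hi] at h3
    omega
  · rintro k - ⟨g, hg⟩
    have h1 : ∀ i, C k ∣ pderiv i f := by
      intro i
      rw [← pderiv_sub_pPart p f i, hg, pderiv_C_mul]
      exact dvd_mul_right _ _
    have := hrel (h1 0) (h1 1)
    obtain ⟨c, hc, hkc⟩ := exists_eq_C_of_isUnit this
    rwa [C_injective _ _ hkc]

/-- Write `grad f = h (d y, -d x)`. Zero divergence makes `h` a constant of `d`, minimality of the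
degree places `h` in `K[x^p,y^p]`, so `h ∣ f - f_{(p)}`; minimality applied to the quotient leaves
`h ∈ K`, and primitivity makes `h` a unit. -/
lemma isRelPrime_of_minimal (hcop : IsRelPrime (d (X 0)) (d (X 1)))
    (hdiv : pderiv (0 : Fin 2) (d (X 0)) + pderiv (1 : Fin 2) (d (X 1)) = 0)
    (hf0 : f - pPart p f ≠ 0) (hdf0 : d (f - pPart p f) = 0)
    (hmin : ∀ h : MvPolynomial (Fin 2) K, h - pPart p h ≠ 0 → d (h - pPart p h) = 0 →
          (f - pPart p f).totalDegree ≤ (h - pPart p h).totalDegree)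
    (hprim : ∀ k : K, k ≠ 0 → C k ∣ (f - pPart p f) → IsUnit k) :
    d f = 0 ∧ IsRelPrime (pderiv 0 f) (pderiv 1 f) := by
  have hdf : d f = 0 := by rw [← derivation_sub_pPart p f, hdf0]
  refine ⟨hdf, ?_⟩
  obtain ⟨h, h0, h1⟩ := exists_factor_of_isRelPrime hcop
    ((derivation_apply_eq d f).symm.trans hdf)
  refine isRelPrime_of_unit hcop ?_ h0 h1
  -- Equality of the mixed second derivatives of `f` reads `d h + h d* = 0`.
  have hdh : d h = 0 := by
    have h2 := pderiv_comm01 f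
    rw [h0, h1, map_neg, pderiv_mul, pderiv_mul] at h2
    rw [derivation_apply_eq d h]
    linear_combination -h2 - h * hdiv
  obtain ⟨i, hi, -⟩ := exists_totalDegree_le_pderiv p hf0 (pPart_sub_self p f)
  have hfi := totalDegree_pderiv_lt hi
  rw [pderiv_sub_pPart] at hi hfi
  obtain ⟨s, hs⟩ : h ∣ pderiv i f := by
    fin_cases i
    · exact ⟨_, h0⟩
    · exact ⟨-d (X 0), by rw [mul_neg]; exact h1⟩
  have hne : h ≠ 0 := by
    rintro rfl
    exact hi (by rw [hs, zero_mul])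
  have hs0 : s ≠ 0 := by
    rintro rfl
    exact hi (by rw [hs, mul_zero])
  rw [hs, totalDegree_mul_of_isDomain hne hs0] at hfi
  have hB : h ∈ gradConst K := by
    rw [← pPart_eq_self_iff p, eq_comm, ← sub_eq_zero]
    by_contra hc
    have h2 := hmin h hc (by rw [derivation_sub_pPart, hdh])
    have h3 : (h - pPart p h).totalDegree ≤ h.totalDegree := by
      apply totalDegree_le_of_support_subset
      intro m hm
      rw [mem_support_iff, coeff_sub, coeff_pPart] at hm
      rw [mem_support_iff]
      intro h4
      apply hm
      simp [h4]
    omega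
  obtain ⟨g, hg⟩ := dvd_sub_pPart p (f := f) hB (by
    rw [Fin.forall_fin_two, h0, h1, dvd_neg]
    exact ⟨dvd_mul_right _ _, dvd_mul_right _ _⟩)
  have hg0 : g ≠ 0 := by
    rintro rfl
    exact hf0 (by rw [hg, mul_zero])
  have hgp : pPart p g = 0 := by
    have h2 := pPart_sub_self p f
    rw [hg, pPart_mul_of_mem p hB] at h2
    exact (mul_eq_zero.1 h2).resolve_left hne
  have hdg : d g = 0 := by
    rw [hg, derivation_const_mul d hB] at hdf0
    exact (mul_eq_zero.1 hdf0).resolve_left hne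
  have h2 := hmin g (by rwa [hgp, sub_zero]) (by rwa [hgp, sub_zero])
  rw [hgp, sub_zero, hg, totalDegree_mul_of_isDomain hne hg0] at h2
  have h3 : h = C (coeff 0 h) := totalDegree_eq_zero_iff_eq_C.1 (by omega)
  have h4 : IsUnit (coeff 0 h) := by
    apply hprim
    · intro h5
      rw [h5, C_0] at h3
      exact hne h3
    · rw [← h3, hg]
      exact dvd_mul_right _ _
  rw [h3]
  exact h4.map C

end Implications

/-- Proposition 1.  `K` a UFD of characteristic `p > 0`, `d` a nonzero
`K`-derivation of `K[x,y]` with `d(x), d(y)` coprime, `f ∈ K[x,y] \ K[x^p,y^p]`.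
TFAE:
(1) `K[x,y]^d = K[x^p,y^p,f]`;
(2) `d = c·d_f` for some invertible `c ∈ K`;
(3) `d(f) = 0` and `gcd(∂f/∂x, ∂f/∂y)` is a unit;
(4) `d* = 0`, `f − f_{(p)}` is a nonzero constant of `d` of minimal total degree
    among nonzero constants of the form `h − h_{(p)}`, and `f − f_{(p)}` is not
    divisible by any noninvertible nonzero element of `K`. -/
theorem proposition1_one_element_p_basis
    {K : Type*} [CommRing K] [IsDomain K] [UniqueFactorizationMonoid K]
    (p : ℕ) [Fact p.Prime] [CharP K p]
    (d : Derivation K (MvPolynomial (Fin 2) K) (MvPolynomial (Fin 2) K))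
    (hd : d ≠ 0)
    (hcop : ∀ q : MvPolynomial (Fin 2) K, q ∣ d (X 0) → q ∣ d (X 1) → IsUnit q)
    (f : MvPolynomial (Fin 2) K)
    (hf : f ∉ Algebra.adjoin K ({X 0 ^ p, X 1 ^ p} : Set (MvPolynomial (Fin 2) K))) :
    [({q : MvPolynomial (Fin 2) K | d q = 0} =
        ↑(Algebra.adjoin K ({X 0 ^ p, X 1 ^ p, f} : Set (MvPolynomial (Fin 2) K)))),
      (∃ c : K, IsUnit c ∧ ∀ g,
        d g = C c * (pderiv (0 : Fin 2) f * pderiv (1 : Fin 2) g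
                   - pderiv (1 : Fin 2) f * pderiv (0 : Fin 2) g)),
      (d f = 0 ∧ ∀ q : MvPolynomial (Fin 2) K,
        q ∣ pderiv (0 : Fin 2) f → q ∣ pderiv (1 : Fin 2) f → IsUnit q),
      (pderiv (0 : Fin 2) (d (X 0)) + pderiv (1 : Fin 2) (d (X 1)) = 0 ∧
        f - pPart p f ≠ 0 ∧
        d (f - pPart p f) = 0 ∧
        (∀ h : MvPolynomial (Fin 2) K, h - pPart p h ≠ 0 → d (h - pPart p h) = 0 →
          (f - pPart p f).totalDegree ≤ (h - pPart p h).totalDegree) ∧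
        (∀ k : K, k ≠ 0 → C k ∣ (f - pPart p f) → IsUnit k))].TFAE := by
  rw [← gradConst_eq_adjoin p] at hf
  have hcop' : IsRelPrime (d (X 0)) (d (X 1)) := fun q h0 h1 => hcop q h0 h1
  tfae_have 1 → 3 := fun h =>
    let h' := isRelPrime_of_ker_eq p hcop' hf h
    ⟨h'.1, fun _ h0 h1 => h'.2 h0 h1⟩
  tfae_have 3 → 1 := fun h => ker_eq_of_isRelPrime p hcop' hf h.1 fun q h0 h1 => h.2 q h0 h1
  tfae_have 3 → 2 := fun h => jacobian_of_isRelPrime hcop' h.1 fun q h0 h1 => h.2 q h0 h1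
  tfae_have 2 → 3 := fun h =>
    let h' := isRelPrime_of_jacobian hcop' h
    ⟨h'.1, fun _ h0 h1 => h'.2 h0 h1⟩
  tfae_have 3 → 4 := fun h => minimal_of_isRelPrime p hcop' hf h.1 fun q h0 h1 => h.2 q h0 h1
  tfae_have 4 → 3 := fun ⟨h1, h2, h3, h4, h5⟩ =>
    let h' := isRelPrime_of_minimal p hcop' h1 h2 h3 h4 h5
    ⟨h'.1, fun _ h0 h1 => h'.2 h0 h1⟩
  tfae_finish
end

section
/- Let K be a UFD of characteristic p > 0 and let d be an irreducible K-derivation of K[x_1, …, x_n], i.e. gcd(d(x_1), …, d(x_n)) is a unit. If f_1, …, f_{n−1} ∈ K[x_1, …, x_n]^d are p-independent over K[x_1^p, …, x_n^p] and F̄ = dgcd(f_1, …, f_{n−1}), then d* = 0 if and only if d(F̄) = 0. -/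
/-!
Let `Jᵢ` be the signed `m × m` minor of the Jacobian matrix of `f₁, …, f_m` omitting `x_i`
(`jacCofactor`).  The derivation `∑ Jᵢ ∂ᵢ` kills every `f_a` and has divergence zero
(`sum_pderiv_jacCofactor`).

The `p`-independence makes the derivations killing all `f_a` a space of rank one over the fraction
field `L` of the polynomial ring: if `E` is the fraction field of `K[x₁^p, …, xₙ^p]`, then
`[L : E] ≤ p^{m+1}`, and a field of constants `F` containing the `f_a` has `[F : E] ≥ p^m`.  Hence
`[L : F] ≤ p`, and a derivation over `F` is determined by its value at one element outside `F`
(`derivation_eq_zero_of_constants`).  It follows that some `Jᵢ` is nonzero, and that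
`(Jᵢ)` and `(d(xᵢ))` are proportional over `L`.  As the `d(xᵢ)` are coprime in a UFD, `Jᵢ = G d(xᵢ)`
for a nonzero polynomial `G` (`exists_jacCofactor_eq_mul`), and `G` is associated to the gcd `F̄` of
the minors.  Taking divergences, `0 = ∑ ∂ᵢ(G d(xᵢ)) = G d* + d(G)`; since units are constants of
`d`, this says that `d* = 0` exactly when `d(F̄) = 0`.
-/

open MvPolynomial

/-! ### A degree count for purely inseparable extensions -/

open IntermediateField in
/-- If `[L : E] ≤ p^{m+1}` and `[F : E] ≥ p^m`, then `[L : F] ≤ p`, while an element `y ∉ F` with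
`y^p ∈ F` has degree `p` over `F` because `T^p - y^p` is irreducible.  So `L = F(y)`, and a field
`C ⊇ F` containing `y` is all of `L`. -/
theorem IntermediateField.eq_top_of_prime_pow_finrank
    {E L : Type*} [Field E] [Field L] [Algebra E L] [FiniteDimensional E L]
    (p : ℕ) [hp : Fact p.Prime] [CharP L p] (m : ℕ)
    (hL : Module.finrank E L ≤ p ^ (m + 1)) (F C : IntermediateField E L) (hFC : F ≤ C)
    (hF : p ^ m ≤ Module.finrank E F) (y : L) (hyC : y ∈ C) (hyF : y ∉ F) (hyp : y ^ p ∈ F) :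
    C = ⊤ := by
  have hirr : Irreducible (Polynomial.X ^ p - Polynomial.C (⟨y ^ p, hyp⟩ : F)) := by
    refine X_pow_sub_C_irreducible_of_prime hp.out fun b hb => hyF ?_
    have h1 : (b : L) ^ p = y ^ p := congrArg Subtype.val hb
    have h2 : (b : L) = y := frobenius_inj L p h1
    exact h2 ▸ b.2
  have hmin : minpoly F y = Polynomial.X ^ p - Polynomial.C (⟨y ^ p, hyp⟩ : F) := by
    refine (minpoly.eq_of_irreducible_of_monic hirr ?_
      (Polynomial.monic_X_pow_sub_C _ hp.out.ne_zero)).symm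
    simp only [map_sub, map_pow, Polynomial.aeval_X, Polynomial.aeval_C]
    exact sub_self _
  have hint : IsIntegral F y := Algebra.IsIntegral.isIntegral y
  have hdeg : Module.finrank F F⟮y⟯ = p := by
    rw [IntermediateField.adjoin.finrank hint, hmin, Polynomial.natDegree_X_pow_sub_C]
  have hFL : Module.finrank F L ≤ p := by
    have h := Module.finrank_mul_finrank E F L
    have hpos : 0 < p ^ m := pow_pos hp.out.pos m
    refine Nat.le_of_mul_le_mul_left ?_ hpos
    calc p ^ m * Module.finrank F L ≤ Module.finrank E F * Module.finrank F L := by gcongr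
      _ ≤ p ^ m * p := by rw [h, ← pow_succ]; exact hL
  have htop : F⟮y⟯ = ⊤ :=
    IntermediateField.eq_of_le_of_finrank_le le_top (by
      rw [IntermediateField.finrank_top', hdeg]; exact hFL)
  have hle : F⟮y⟯ ≤ IntermediateField.extendScalars hFC := by
    rw [IntermediateField.adjoin_simple_le_iff]; exact hyC
  rw [eq_top_iff]
  intro z _
  exact hle (htop ▸ IntermediateField.mem_top : z ∈ F⟮y⟯)

/-! ### The subring `K[x₁^p, …, xₙ^p]` -/

section
variable {K : Type*} [CommRing K] {n : ℕ}

/-- The subalgebra `K[x₁^p, …, xₙ^p]`. -/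
noncomputable abbrev pPowers (K : Type*) [CommRing K] (n p : ℕ) :
    Subalgebra K (MvPolynomial (Fin n) K) :=
  Algebra.adjoin K (Set.range fun i : Fin n => (X i : MvPolynomial (Fin n) K) ^ p)

theorem pow_mem_pPowers (p : ℕ) [Fact p.Prime] [CharP K p] (g : MvPolynomial (Fin n) K) :
    g ^ p ∈ pPowers K n p := by
  induction g using MvPolynomial.induction_on with
  | C a => rw [← map_pow]; exact Subalgebra.algebraMap_mem _ _
  | add f g hf hg => rw [add_pow_char]; exact add_mem hf hg
  | mul_X f i hf =>
    rw [mul_pow]; exact mul_mem hf (Algebra.subset_adjoin ⟨i, rfl⟩)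

theorem derivation_pPowers_eq_zero (p : ℕ) [CharP K p]
    (η : Derivation K (MvPolynomial (Fin n) K) (MvPolynomial (Fin n) K))
    {b : MvPolynomial (Fin n) K} (hb : b ∈ pPowers K n p) : η b = 0 := by
  refine Derivation.eqOn_adjoin (D1 := η) (D2 := 0) ?_ hb
  rintro _ ⟨i, rfl⟩
  simp [Derivation.leibniz_pow]

theorem span_pPowers_monomials (p : ℕ) [hp : Fact p.Prime] :
    Submodule.span (pPowers K n p)
      (Set.range fun e : Fin n → Fin p => ∏ i, (X i : MvPolynomial (Fin n) K) ^ (e i : ℕ)) = ⊤ := by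
  rw [eq_top_iff]
  rintro g -
  induction g using MvPolynomial.induction_on' with
  | add f g hf hg => exact add_mem hf hg
  | monomial s a =>
    have hmem : C a * ∏ i, ((X i : MvPolynomial (Fin n) K) ^ p) ^ (s i / p) ∈ pPowers K n p :=
      mul_mem (Subalgebra.algebraMap_mem _ _)
        (prod_mem fun i _ => pow_mem (Algebra.subset_adjoin (Set.mem_range_self i)) _)
    let e : Fin n → Fin p := fun i => ⟨s i % p, Nat.mod_lt _ hp.out.pos⟩
    have heq : monomial s a = (⟨C a * ∏ i, ((X i : MvPolynomial (Fin n) K) ^ p) ^ (s i / p),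
        hmem⟩ : pPowers K n p) •
        ∏ i, (X i : MvPolynomial (Fin n) K) ^ (e i : ℕ) := by
      rw [Subalgebra.smul_def, smul_eq_mul, mul_assoc, ← Finset.prod_mul_distrib, monomial_eq,
        Finsupp.prod_fintype _ _ (by simp)]
      congr 1
      refine Finset.prod_congr rfl fun i _ => ?_
      rw [← pow_mul, ← pow_add, Nat.div_add_mod]
    rw [heq]
    exact Submodule.smul_mem _ _ (Submodule.subset_span ⟨e, rfl⟩)
end

/-! ### Constants in the fraction field -/

/-- Every element of `L = Frac R` is a fraction with denominator in `B`, since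
`r / s = r s^{p-1} / s^p`. -/
theorem exists_eq_div_of_pow_mem {B R : Type*} [CommRing B] [CommRing R] [IsDomain R]
    [Algebra B R] (p : ℕ) [hp : Fact p.Prime] (hpow : ∀ r : R, ∃ b : B, algebraMap B R b = r ^ p)
    (L : Type*) [Field L] [Algebra R L] [IsFractionRing R L] [Algebra B L] [IsScalarTower B R L]
    (z : L) :
    ∃ (r : R) (b : B), b ≠ 0 ∧ algebraMap B L b * z = algebraMap R L r := by
  obtain ⟨r, s, hs, rfl⟩ := IsFractionRing.div_surjective (A := R) z
  have hs0 : s ≠ 0 := nonZeroDivisors.ne_zero hs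
  have hsL : algebraMap R L s ≠ 0 := by simpa using hs0
  obtain ⟨b, hb⟩ := hpow s
  refine ⟨r * s ^ (p - 1), b, ?_, ?_⟩
  · rintro rfl
    exact pow_ne_zero p hs0 (by rw [← hb, map_zero])
  · rw [IsScalarTower.algebraMap_apply B R L, hb]
    obtain ⟨k, hk⟩ : ∃ k, p = k + 1 := ⟨p - 1, by have := hp.out.pos; omega⟩
    rw [hk, Nat.add_sub_cancel, pow_succ, map_mul, map_mul]
    field_simp

section
variable {B R : Type*} [CommRing B] [IsDomain B] [CommRing R] [IsDomain R] [Algebra B R]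
  [FaithfulSMul B R] (p : ℕ) [hp : Fact p.Prime]
  (E L : Type*) [Field E] [Field L] [Algebra B E] [IsFractionRing B E] [Algebra R L]
  [IsFractionRing R L] [Algebra E L] [Algebra B L] [IsScalarTower B E L] [IsScalarTower B R L]

/-- The field of constants in `L = Frac R` of the extension of `η` to `L`.  It is described without
extending `η`: it consists of the fractions `r / b` with `η r = 0` and `0 ≠ b ∈ B`, which suffices
because every element of `L` has a denominator in `B`, and `η` vanishes on `B`. -/
def constField (hpow : ∀ r : R, ∃ b : B, algebraMap B R b = r ^ p)
    (η : Derivation B R R) : IntermediateField E L where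
  carrier := {z | ∃ b : B, b ≠ 0 ∧ ∃ r : R, η r = 0 ∧ algebraMap B L b * z = algebraMap R L r}
  mul_mem' := by
    rintro z w ⟨b, hb, r, hr, hz⟩ ⟨c, hc, s, hs, hw⟩
    refine ⟨b * c, mul_ne_zero hb hc, r * s, by simp [hr, hs], ?_⟩
    rw [map_mul, map_mul, ← hz, ← hw]; ring
  add_mem' := by
    rintro z w ⟨b, hb, r, hr, hz⟩ ⟨c, hc, s, hs, hw⟩
    refine ⟨b * c, mul_ne_zero hb hc, algebraMap B R c * r + algebraMap B R b * s,
      by simp [hr, hs], ?_⟩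
    rw [map_mul, map_add, map_mul, map_mul, ← hz, ← hw, ← IsScalarTower.algebraMap_apply,
      ← IsScalarTower.algebraMap_apply]
    ring
  algebraMap_mem' := by
    intro e
    obtain ⟨a, b, hb, rfl⟩ := IsFractionRing.div_surjective (A := B) e
    have hb0 : b ≠ 0 := nonZeroDivisors.ne_zero hb
    have hbE : algebraMap B E b ≠ 0 := by simpa using hb0
    refine ⟨b, hb0, algebraMap B R a, by simp, ?_⟩
    rw [← IsScalarTower.algebraMap_apply, IsScalarTower.algebraMap_apply B E L,
      IsScalarTower.algebraMap_apply B E L a, ← map_mul, mul_div_cancel₀ _ hbE]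
  inv_mem' := by
    rintro z ⟨b, hb, r, hr, hz⟩
    by_cases hr0 : r = 0
    · have hbL : algebraMap B L b ≠ 0 := by
        rw [IsScalarTower.algebraMap_apply B R L]
        simpa using hb
      have hz0 : z = 0 := by simpa [hr0, hbL] using hz
      exact ⟨1, one_ne_zero, 0, by simp, by simp [hz0]⟩
    · -- `z = r / b` has inverse `b r^{p-1} / r^p`.
      obtain ⟨c, hc⟩ := hpow r
      have hrL : algebraMap R L r ≠ 0 := by simpa using hr0
      have hz0 : z ≠ 0 := by rintro rfl; simp [← hz] at hrL
      refine ⟨c, ?_, algebraMap B R b * r ^ (p - 1), by simp [Derivation.leibniz_pow, hr], ?_⟩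
      · rintro rfl
        exact pow_ne_zero p hr0 (by rw [← hc, map_zero])
      · rw [IsScalarTower.algebraMap_apply B R L, hc, map_mul, ← IsScalarTower.algebraMap_apply]
        obtain ⟨k, hk⟩ : ∃ k, p = k + 1 := ⟨p - 1, by have := hp.out.pos; omega⟩
        rw [hk, Nat.add_sub_cancel, pow_succ, map_mul, ← hz]
        field_simp

theorem algebraMap_mem_constField (hpow : ∀ r : R, ∃ b : B, algebraMap B R b = r ^ p)
    (η : Derivation B R R) (g : R) :
    algebraMap R L g ∈ constField p E L hpow η ↔ η g = 0 := by
  constructor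
  · rintro ⟨b, hb, r, hr, h⟩
    rw [IsScalarTower.algebraMap_apply B R L, ← map_mul,
      (IsFractionRing.injective R L).eq_iff] at h
    have h2 : algebraMap B R b * η g = 0 := by
      rw [← hr, ← h, Derivation.leibniz]
      simp
    exact (mul_eq_zero.mp h2).resolve_left (by simpa using hb)
  · intro h
    exact ⟨1, one_ne_zero, g, h, by simp⟩

theorem span_fractionField_eq_top (hpow : ∀ r : R, ∃ b : B, algebraMap B R b = r ^ p)
    {ι : Type*} (v : ι → R)
    (hv : Submodule.span B (Set.range v) = ⊤) :
    Submodule.span E (Set.range fun i => algebraMap R L (v i)) = ⊤ := by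
  set S := Submodule.span E (Set.range fun i => algebraMap R L (v i)) with hS
  have hpoly : ∀ g : R, algebraMap R L g ∈ S := by
    intro g
    have hg : g ∈ Submodule.span B (Set.range v) := hv ▸ Submodule.mem_top
    induction hg using Submodule.span_induction with
    | mem x hx => obtain ⟨e, rfl⟩ := hx; exact Submodule.subset_span ⟨e, rfl⟩
    | zero => rw [map_zero]; exact zero_mem _
    | add x y _ _ hx hy => rw [map_add]; exact add_mem hx hy
    | smul b x _ hx =>
      have := S.smul_mem (algebraMap B E b) hx
      rwa [Algebra.smul_def, ← IsScalarTower.algebraMap_apply,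
        IsScalarTower.algebraMap_apply B R L, ← map_mul, ← Algebra.smul_def] at this
  rw [eq_top_iff]
  rintro z -
  obtain ⟨r, b, hb, hz⟩ := exists_eq_div_of_pow_mem p hpow L z
  have hbL : algebraMap E L (algebraMap B E b) ≠ 0 := by simpa using hb
  have := S.smul_mem (algebraMap B E b)⁻¹ (hpoly r)
  rwa [Algebra.smul_def, map_inv₀, ← hz, IsScalarTower.algebraMap_apply B E L,
    inv_mul_cancel_left₀ hbL] at this
end

/-- Two derivations `d`, `η` that kill `m` `p`-independent elements of a ring of rank at most
`p^{m+1}`: if `η` also kills some `y` that `d` does not, then `η = 0`.  The field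
`F = L^d ∩ L^η` has degree at least `p^m` over `E = Frac B` and misses `y`, so
`IntermediateField.eq_top_of_prime_pow_finrank` applies to `F ⊆ L^η`. -/
theorem derivation_eq_zero_of_constants {B R : Type*} [CommRing B] [IsDomain B] [CommRing R]
    [IsDomain R] [Algebra B R] [FaithfulSMul B R] (p : ℕ) [hp : Fact p.Prime] [CharP R p]
    (hpow : ∀ r : R, ∃ b : B, algebraMap B R b = r ^ p) {m : ℕ}
    (v : (Fin (m + 1) → Fin p) → R) (hv : Submodule.span B (Set.range v) = ⊤)
    (d η : Derivation B R R) (f : Fin m → R)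
    (hind : LinearIndependent B (fun e : Fin m → Fin p => ∏ i, f i ^ (e i : ℕ)))
    (hdf : ∀ i, d (f i) = 0) (hηf : ∀ i, η (f i) = 0)
    (y : R) (hdy : d y ≠ 0) (hηy : η y = 0) : η = 0 := by
  let E := FractionRing B
  let L := FractionRing R
  let _ : Algebra E L := FractionRing.liftAlgebra B L
  have : CharP L p := charP_of_injective_algebraMap (IsFractionRing.injective R L) p
  have hspan := span_fractionField_eq_top p E L hpow v hv
  have : FiniteDimensional E L := ⟨⟨Set.finite_range _ |>.toFinset, by simpa using hspan⟩⟩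
  have hL : Module.finrank E L ≤ p ^ (m + 1) := by
    simpa using finrank_le_of_span_eq_top hspan
  have hindL : LinearIndependent E
      (fun e : Fin m → Fin p => algebraMap R L (∏ i, f i ^ (e i : ℕ))) := by
    rw [← LinearIndependent.iff_fractionRing (R := B)]
    exact hind.map' ((IsScalarTower.toAlgHom B R L).toLinearMap)
      (LinearMap.ker_eq_bot.mpr (IsFractionRing.injective R L))
  let F : IntermediateField E L := constField p E L hpow d ⊓ constField p E L hpow η
  have hfF : ∀ e : Fin m → Fin p, algebraMap R L (∏ i, f i ^ (e i : ℕ)) ∈ F := by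
    intro e
    rw [map_prod]
    refine prod_mem fun i _ => ?_
    have hfi : algebraMap R L (f i) ∈ F :=
      ⟨(algebraMap_mem_constField p E L hpow d _).mpr (hdf i),
        (algebraMap_mem_constField p E L hpow η _).mpr (hηf i)⟩
    rw [map_pow]
    exact pow_mem hfi _
  have hF : p ^ m ≤ Module.finrank E F := by
    have h : LinearIndependent E (fun e : Fin m → Fin p =>
        (⟨algebraMap R L (∏ i, f i ^ (e i : ℕ)), hfF e⟩ : F)) :=
      LinearIndependent.of_comp F.val.toLinearMap hindL
    simpa using h.fintype_card_le_finrank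
  have htop : constField p E L hpow η = ⊤ := by
    refine IntermediateField.eq_top_of_prime_pow_finrank p m hL F _ inf_le_right hF
      (algebraMap R L y) ((algebraMap_mem_constField p E L hpow η _).mpr hηy) ?_ ?_
    · exact fun h => hdy ((algebraMap_mem_constField p E L hpow d _).mp h.1)
    · obtain ⟨b, hb⟩ := hpow y
      rw [← map_pow, ← hb]
      exact ⟨(algebraMap_mem_constField p E L hpow d _).mpr (by simp),
        (algebraMap_mem_constField p E L hpow η _).mpr (by simp)⟩
  ext g
  refine (algebraMap_mem_constField p E L hpow η _).mp ?_
  rw [htop]; trivial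

section
variable {K : Type*} [CommRing K] {n : ℕ}

/-- A `K`-derivation of `K[x₁, …, xₙ]`, regarded as a `K[x₁^p, …, xₙ^p]`-derivation. -/
noncomputable def pPowersDerivation (p : ℕ) [CharP K p]
    (η : Derivation K (MvPolynomial (Fin n) K) (MvPolynomial (Fin n) K)) :
    Derivation (pPowers K n p) (MvPolynomial (Fin n) K) (MvPolynomial (Fin n) K) :=
  Derivation.mk'
    { toFun := η
      map_add' := map_add η
      map_smul' := fun b g => by
        simp [Subalgebra.smul_def, derivation_pPowers_eq_zero p η b.2] }
    (fun a b => η.leibniz a b)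

theorem mvPolynomial_derivation_eq_zero [IsDomain K] (p : ℕ) [Fact p.Prime] [CharP K p] {m : ℕ}
    (d η : Derivation K (MvPolynomial (Fin (m + 1)) K) (MvPolynomial (Fin (m + 1)) K))
    (f : Fin m → MvPolynomial (Fin (m + 1)) K)
    (hind : LinearIndependent (pPowers K (m + 1) p)
      (fun e : Fin m → Fin p => ∏ i, f i ^ (e i : ℕ)))
    (hdf : ∀ i, d (f i) = 0) (hηf : ∀ i, η (f i) = 0)
    (y : MvPolynomial (Fin (m + 1)) K) (hdy : d y ≠ 0) (hηy : η y = 0) : η = 0 := by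
  have h := derivation_eq_zero_of_constants (B := pPowers K (m + 1) p) p
    (fun r : MvPolynomial (Fin (m + 1)) K => ⟨⟨r ^ p, pow_mem_pPowers p r⟩, rfl⟩) _ (span_pPowers_monomials p)
    (pPowersDerivation p d) (pPowersDerivation p η) f hind hdf hηf y hdy hηy
  ext1 i
  exact congrArg (fun D => D (X i)) h
end

/-! ### The Jacobian derivation -/

section
variable {K : Type*} [CommRing K] {m : ℕ}

/-- The coefficient at `∂/∂xᵢ` of the Jacobian derivation `g ↦ jac(g, f₁, …, f_m)`, i.e. the
signed maximal minor of the Jacobian matrix of `f` that omits `xᵢ`. -/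
noncomputable def jacCofactor (f : Fin m → MvPolynomial (Fin (m + 1)) K) (i : Fin (m + 1)) :
    MvPolynomial (Fin (m + 1)) K :=
  (-1) ^ (i : ℕ) * Matrix.det (Matrix.of fun a b => pderiv (i.succAbove b) (f a))

theorem sum_mul_jacCofactor (f : Fin m → MvPolynomial (Fin (m + 1)) K)
    (v : Fin (m + 1) → MvPolynomial (Fin (m + 1)) K) :
    ∑ i, v i * jacCofactor f i =
      Matrix.det (Matrix.of fun r c => (Fin.cons (v r) (fun a => pderiv r (f a)) :
        Fin (m + 1) → MvPolynomial (Fin (m + 1)) K) c) := by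
  rw [Matrix.det_succ_column_zero]
  refine Finset.sum_congr rfl fun i _ => ?_
  rw [jacCofactor, ← Matrix.det_transpose]
  simp only [Matrix.of_apply, Fin.cons_zero]
  rw [mul_left_comm, mul_assoc]
  rfl

theorem sum_jacCofactor_mul_pderiv (f : Fin m → MvPolynomial (Fin (m + 1)) K) (a : Fin m) :
    ∑ i, pderiv i (f a) * jacCofactor f i = 0 := by
  rw [sum_mul_jacCofactor]
  exact Matrix.det_zero_of_column_eq (i := 0) (j := a.succ) (Fin.succ_ne_zero a).symm (by simp)

theorem jacCofactor_eq_sum_perm (f : Fin m → MvPolynomial (Fin (m + 1)) K) (i : Fin (m + 1)) :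
    jacCofactor f i = ∑ σ : Equiv.Perm (Fin (m + 1)),
      if σ 0 = i then (Equiv.Perm.sign σ : ℤ) • ∏ a, pderiv (σ a.succ) (f a) else 0 := by
  have h := sum_mul_jacCofactor f (Pi.single i 1)
  rw [Finset.sum_eq_single i (by intro j _ hj; simp [hj]) (by simp)] at h
  rw [Pi.single_eq_same, one_mul] at h
  rw [h, Matrix.det_apply]
  refine Finset.sum_congr rfl fun σ _ => ?_
  rw [Fin.prod_univ_succ]
  simp only [Matrix.of_apply, Fin.cons_zero, Fin.cons_succ, Pi.single_apply]
  split_ifs <;> simp [Units.smul_def]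

theorem pderiv_pderiv_comm (i j : Fin (m + 1)) (g : MvPolynomial (Fin (m + 1)) K) :
    pderiv i (pderiv j g) = pderiv j (pderiv i g) := by
  have h : ⁅(pderiv i : Derivation K (MvPolynomial (Fin (m + 1)) K) (MvPolynomial (Fin (m + 1)) K)),
      (pderiv j : Derivation K (MvPolynomial (Fin (m + 1)) K) (MvPolynomial (Fin (m + 1)) K))⁆ = 0 := by
    ext1 k
    classical
    simp [Derivation.commutator_apply, pderiv_X, Pi.single_apply, apply_ite]
  have h2 := congrArg (fun D => D g) h
  simpa [Derivation.commutator_apply, sub_eq_zero] using h2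

theorem derivation_prod (D : Derivation K (MvPolynomial (Fin (m + 1)) K)
    (MvPolynomial (Fin (m + 1)) K)) {ι : Type*} [DecidableEq ι] (s : Finset ι)
    (g : ι → MvPolynomial (Fin (m + 1)) K) :
    D (∏ a ∈ s, g a) = ∑ a ∈ s, D (g a) * ∏ b ∈ s.erase a, g b := by
  induction s using Finset.induction_on with
  | empty => simp
  | insert a s ha ih =>
    rw [Finset.prod_insert ha, Derivation.leibniz, ih, Finset.sum_insert ha,
      Finset.erase_insert ha, smul_eq_mul, smul_eq_mul, Finset.mul_sum, add_comm (Finset.sum _ _)]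
    congr 1
    · ring
    · refine Finset.sum_congr rfl fun b hb => ?_
      have hab : a ≠ b := fun h => ha (h ▸ hb)
      rw [Finset.erase_insert_of_ne hab,
        Finset.prod_insert (fun h => ha (Finset.mem_of_mem_erase h))]
      ring

/-- The Jacobian derivation has divergence zero.  In the Leibniz expansion of
`∑ᵢ ∂ᵢ(jacCofactor f i)`, the terms where the outer derivative hits the factor of `f_a` cancel in
pairs `σ`, `σ ∘ (0 a+1)` by symmetry of second derivatives. -/
theorem sum_pderiv_jacCofactor (f : Fin m → MvPolynomial (Fin (m + 1)) K) :
    ∑ i, pderiv i (jacCofactor f i) = 0 := by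
  have h1 : ∑ i, pderiv i (jacCofactor f i) = ∑ a : Fin m, ∑ σ : Equiv.Perm (Fin (m + 1)),
      (Equiv.Perm.sign σ : ℤ) • (pderiv (σ 0) (pderiv (σ a.succ) (f a)) *
        ∏ b ∈ Finset.univ.erase a, pderiv (σ b.succ) (f b)) := by
    simp_rw [jacCofactor_eq_sum_perm, map_sum]
    rw [Finset.sum_comm, Finset.sum_comm (s := (Finset.univ : Finset (Fin m)))]
    refine Finset.sum_congr rfl fun σ _ => ?_
    rw [Finset.sum_eq_single (σ 0) (by intro j _ hj; rw [if_neg hj.symm, map_zero]) (by simp),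
      if_pos rfl, map_zsmul, derivation_prod, Finset.smul_sum]
  rw [h1]
  refine Finset.sum_eq_zero fun a _ => ?_
  refine Finset.sum_involution (fun σ _ => σ * Equiv.swap 0 a.succ) ?_ ?_ ?_ ?_
  · intro σ _
    have hprod : ∏ b ∈ Finset.univ.erase a,
        pderiv ((σ * Equiv.swap 0 a.succ) b.succ) (f b) =
        ∏ b ∈ Finset.univ.erase a, pderiv (σ b.succ) (f b) := by
      refine Finset.prod_congr rfl fun b hb => ?_
      rw [Equiv.Perm.mul_apply, Equiv.swap_apply_of_ne_of_ne (Fin.succ_ne_zero b)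
        (fun h => Finset.ne_of_mem_erase hb (Fin.succ_injective _ h))]
    rw [hprod, Equiv.Perm.sign_mul, Equiv.Perm.sign_swap (Fin.succ_ne_zero a).symm,
      Equiv.Perm.mul_apply, Equiv.Perm.mul_apply, Equiv.swap_apply_left, Equiv.swap_apply_right,
      pderiv_pderiv_comm]
    simp
  · intro σ _ _ h
    exact (Fin.succ_ne_zero a).symm (Equiv.swap_eq_one_iff.mp (mul_eq_left.mp h))
  · intro σ _; exact Finset.mem_univ _
  · intro σ _; simp [mul_assoc]

theorem derivation_apply_eq_sum (D : Derivation K (MvPolynomial (Fin (m + 1)) K)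
    (MvPolynomial (Fin (m + 1)) K)) (g : MvPolynomial (Fin (m + 1)) K) :
    D g = ∑ i, D (X i) * pderiv i g := by
  have h : D = ∑ i, D (X i) • pderiv i := by
    ext1 k
    classical
    have : ∀ x, (∑ i, D (X i) • pderiv i : Derivation K (MvPolynomial (Fin (m + 1)) K)
        (MvPolynomial (Fin (m + 1)) K)) x = ∑ i, D (X i) * pderiv i x := by
      intro x
      rw [← Derivation.coeFnAddMonoidHom_apply, map_sum]; simp [Finset.sum_apply]
    rw [this]
    simp [pderiv_X, Pi.single_apply]
  conv_lhs => rw [h]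
  rw [← Derivation.coeFnAddMonoidHom_apply, map_sum]; simp [Finset.sum_apply]

/-- The minors indexed by arbitrary column choices `j` are zero or, up to sign, cofactors. -/
theorem dvd_minor_of_dvd_jacCofactor (f : Fin m → MvPolynomial (Fin (m + 1)) K)
    (G : MvPolynomial (Fin (m + 1)) K) (hG : ∀ i, G ∣ jacCofactor f i) (j : Fin m → Fin (m + 1)) :
    G ∣ Matrix.det (Matrix.of fun a b => pderiv (j b) (f a)) := by
  by_cases hj : Function.Injective j
  · obtain ⟨i, hi⟩ : ∃ i, ∀ b, j b ≠ i := by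
      by_contra! h
      have := Fintype.card_le_of_surjective j h
      simp at this
    choose σ hσ using fun b => Fin.exists_succAbove_eq (hi b)
    have hσi : Function.Injective σ := fun a b h => hj (by rw [← hσ a, ← hσ b, h])
    let τ : Equiv.Perm (Fin m) := Equiv.ofBijective σ (Finite.injective_iff_bijective.mp hσi)
    have hdet : Matrix.det (Matrix.of fun a b => pderiv (j b) (f a)) =
        Equiv.Perm.sign τ * Matrix.det (Matrix.of fun a b => pderiv (i.succAbove b) (f a)) := by
      rw [← Matrix.det_permute' τ]
      congr 1
      ext1 a b
      simp [τ, hσ]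
    rw [hdet]
    refine Dvd.dvd.mul_left ?_ _
    have := (hG i).mul_left ((-1) ^ (i : ℕ))
    rwa [jacCofactor, ← mul_assoc, ← mul_pow, neg_one_mul, neg_neg, one_pow, one_mul] at this
  · obtain ⟨a, b, hab, hne⟩ : ∃ a b, j a = j b ∧ a ≠ b := by
      simpa [Function.Injective] using hj
    rw [Matrix.det_zero_of_column_eq hne (by simp [hab])]
    exact dvd_zero G
end

/-! ### Proportionality of `d` and the Jacobian derivation -/

section
variable {K : Type*} [CommRing K] [IsDomain K] (p : ℕ) [Fact p.Prime] [CharP K p] {m : ℕ}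

/-- A vanishing minor would give a nonzero derivation killing all `f a` and `x_{i₀}`. -/
theorem jacCofactor_ne_zero
    (d : Derivation K (MvPolynomial (Fin (m + 1)) K) (MvPolynomial (Fin (m + 1)) K))
    (f : Fin m → MvPolynomial (Fin (m + 1)) K) (hdf : ∀ i, d (f i) = 0)
    (hind : LinearIndependent (pPowers K (m + 1) p)
      (fun e : Fin m → Fin p => ∏ i, f i ^ (e i : ℕ)))
    (i₀ : Fin (m + 1)) (hi₀ : d (X i₀) ≠ 0) :
    jacCofactor f i₀ ≠ 0 := by
  intro h
  have hdet : Matrix.det (Matrix.of fun a b => pderiv (i₀.succAbove b) (f a)) = 0 :=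
    (mul_eq_zero.mp h).resolve_left (pow_ne_zero _ (neg_ne_zero.mpr one_ne_zero))
  obtain ⟨v, hv0, hv⟩ := Matrix.exists_mulVec_eq_zero_iff.mpr hdet
  let c : Fin (m + 1) → MvPolynomial (Fin (m + 1)) K := i₀.insertNth 0 v
  have hη : mkDerivation K c = 0 := by
    refine mvPolynomial_derivation_eq_zero p d _ f hind hdf (fun a => ?_) (X i₀) hi₀ ?_
    · rw [derivation_apply_eq_sum, Fin.sum_univ_succAbove _ i₀]
      have hva := congrFun hv a
      simp only [Matrix.mulVec, dotProduct, Matrix.of_apply, Pi.zero_apply] at hva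
      simp only [mkDerivation_X, c, Fin.insertNth_apply_same, Fin.insertNth_apply_succAbove,
        zero_mul, zero_add]
      rw [← hva]
      exact Finset.sum_congr rfl fun b _ => mul_comm _ _
    · simp [mkDerivation_X, c]
  refine hv0 (funext fun b => ?_)
  have hb := congrArg (fun D => D (X (i₀.succAbove b))) hη
  simpa [mkDerivation_X, c] using hb

theorem jacCofactor_proportional
    (d : Derivation K (MvPolynomial (Fin (m + 1)) K) (MvPolynomial (Fin (m + 1)) K))
    (f : Fin m → MvPolynomial (Fin (m + 1)) K) (hdf : ∀ i, d (f i) = 0)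
    (hind : LinearIndependent (pPowers K (m + 1) p)
      (fun e : Fin m → Fin p => ∏ i, f i ^ (e i : ℕ)))
    (i₀ : Fin (m + 1)) (hi₀ : d (X i₀) ≠ 0)
    (i : Fin (m + 1)) :
    jacCofactor f i₀ * d (X i) = d (X i₀) * jacCofactor f i := by
  have hη : jacCofactor f i₀ • d - d (X i₀) • mkDerivation K (jacCofactor f) = 0 := by
    refine mvPolynomial_derivation_eq_zero p d _ f hind hdf (fun a => ?_) (X i₀) hi₀ ?_
    · have ha : mkDerivation K (jacCofactor f) (f a) = 0 := by
        rw [derivation_apply_eq_sum, ← sum_jacCofactor_mul_pderiv f a]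
        simp only [mkDerivation_X]
        exact Finset.sum_congr rfl fun b _ => mul_comm _ _
      simp [hdf, ha]
    · simp [mkDerivation_X, mul_comm]
  have hi := congrArg (fun D => D (X i)) hη
  simpa [mkDerivation_X, sub_eq_zero] using hi
end

section
variable {K : Type*} [CommRing K] [IsDomain K] [UniqueFactorizationMonoid K]

/-- Since the `d(xᵢ)` have no common factor, the rational proportionality factor between `d` and
the Jacobian derivation is a polynomial. -/
theorem exists_jacCofactor_eq_mul (p : ℕ) [Fact p.Prime] [CharP K p] {m : ℕ}
    (d : Derivation K (MvPolynomial (Fin (m + 1)) K) (MvPolynomial (Fin (m + 1)) K))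
    (hcop : ∀ q : MvPolynomial (Fin (m + 1)) K, (∀ i, q ∣ d (X i)) → IsUnit q)
    (f : Fin m → MvPolynomial (Fin (m + 1)) K) (hdf : ∀ i, d (f i) = 0)
    (hind : LinearIndependent (pPowers K (m + 1) p)
      (fun e : Fin m → Fin p => ∏ i, f i ^ (e i : ℕ))) :
    ∃ G : MvPolynomial (Fin (m + 1)) K, G ≠ 0 ∧ ∀ i, jacCofactor f i = G * d (X i) := by
  obtain ⟨i₀, hi₀⟩ : ∃ i₀, d (X i₀) ≠ 0 := by
    by_contra! h
    exact not_isUnit_zero (hcop 0 fun i => by rw [h i])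
  have hJ := jacCofactor_ne_zero p d f hdf hind i₀ hi₀
  have hprop := jacCofactor_proportional p d f hdf hind i₀ hi₀
  have hdvd : d (X i₀) ∣ jacCofactor f i₀ := by
    obtain ⟨a, b, c, hab, ha, hb⟩ :=
      UniqueFactorizationMonoid.exists_reduced_factors (d (X i₀)) hi₀ (jacCofactor f i₀)
    have hc : c ≠ 0 := by rintro rfl; simp [← ha] at hi₀
    have hau : IsUnit a := by
      refine hcop a fun i => hab.dvd_of_dvd_mul_left ⟨jacCofactor f i, ?_⟩
      refine mul_left_cancel₀ hc ?_
      rw [← mul_assoc, hb, hprop i, ← ha, mul_assoc]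
    rw [← ha, ← hb]
    exact mul_dvd_mul_left c hau.dvd
  obtain ⟨G, hG⟩ := hdvd
  refine ⟨G, ?_, fun i => mul_left_cancel₀ hi₀ ?_⟩
  · rintro rfl
    exact hJ (by rw [hG, mul_zero])
  · rw [← hprop i, hG, mul_assoc]
end



/-- Final remark.  `K` a UFD of characteristic `p > 0`, `d` an
irreducible `K`-derivation of `K[x₁,…,xₙ]` (`n = m + 1`), i.e. the `d(xᵢ)` are in
common coprime.  If `f₁,…,f_{n-1}` are constants of `d`, `p`-independent over
`K[x₁^p,…,xₙ^p]`, and `F̄ = dgcd(f₁,…,f_{n-1})` (a gcd of all the `(n-1)×(n-1)`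
Jacobian minors), then `d* = 0 ↔ d(F̄) = 0`. -/
theorem final_remark_divergence_iff
    {K : Type*} [CommRing K] [IsDomain K] [UniqueFactorizationMonoid K]
    (p : ℕ) [Fact p.Prime] [CharP K p] (m : ℕ)
    (d : Derivation K (MvPolynomial (Fin (m + 1)) K) (MvPolynomial (Fin (m + 1)) K))
    (hcop : ∀ q : MvPolynomial (Fin (m + 1)) K, (∀ i, q ∣ d (X i)) → IsUnit q)
    (f : Fin m → MvPolynomial (Fin (m + 1)) K)
    (hdf : ∀ i, d (f i) = 0)
    (hind : LinearIndependent
      ↥(Algebra.adjoin K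
          (Set.range fun i : Fin (m + 1) => (X i : MvPolynomial (Fin (m + 1)) K) ^ p))
      (fun e : Fin m → Fin p => ∏ i, f i ^ (e i : ℕ)))
    (Fbar : MvPolynomial (Fin (m + 1)) K)
    (hFbar₁ : ∀ j : Fin m → Fin (m + 1),
      Fbar ∣ Matrix.det (Matrix.of fun a b => pderiv (j b) (f a)))
    (hFbar₂ : ∀ q : MvPolynomial (Fin (m + 1)) K,
      (∀ j : Fin m → Fin (m + 1),
        q ∣ Matrix.det (Matrix.of fun a b => pderiv (j b) (f a))) → q ∣ Fbar) :
    (∑ i, pderiv i (d (X i)) = 0) ↔ d Fbar = 0 := by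
  obtain ⟨G, hG0, hG⟩ := exists_jacCofactor_eq_mul p d hcop f hdf hind
  have hdiv : G * ∑ i, pderiv i (d (X i)) + d G = 0 := by
    rw [← sum_pderiv_jacCofactor f, derivation_apply_eq_sum d G, Finset.mul_sum,
      ← Finset.sum_add_distrib]
    refine Finset.sum_congr rfl fun i _ => ?_
    rw [hG i, Derivation.leibniz, smul_eq_mul, smul_eq_mul]
  obtain ⟨H, hH⟩ : G ∣ Fbar :=
    hFbar₂ G (dvd_minor_of_dvd_jacCofactor f G fun i => ⟨_, hG i⟩)
  -- `G H = Fbar` divides every cofactor `G d(xᵢ)`, so `H` divides every `d(xᵢ)`.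
  have hHu : IsUnit H := by
    refine hcop H fun i => (mul_dvd_mul_iff_left hG0).mp ?_
    rw [← hH, ← hG i]
    exact (hFbar₁ i.succAbove).mul_left _
  obtain ⟨c, hc, rfl⟩ := MvPolynomial.isUnit_iff_eq_C_of_isReduced.mp hHu
  have hdF : d Fbar = C c * d G := by
    rw [hH, mul_comm, Derivation.leibniz, derivation_C, smul_zero, add_zero, smul_eq_mul]
  rw [hdF, mul_eq_zero, or_iff_right hHu.ne_zero]
  constructor
  · intro h
    simpa [h] using hdiv
  · intro h
    rw [h, add_zero] at hdiv
    exact (mul_eq_zero.mp hdiv).resolve_left hG0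
end
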